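/- Suppose 𝒴 = span(ℝ^N_0, Y_1,…,Y_R) is a finite-dimensional vector subspace of L^0(Ω,𝐅_T,P) with ℝ^N_0 ⊆ 𝒴, and NCA(𝒴) holds. If f ∈ L^0(Ω,𝐅_T,P) is not 𝒴-collectively replicable and the classical super-replication prices satisfy ρ_{i,+}(f^i) < +∞ and ρ_{i,+}(−f^i) < +∞ for every i, then the set Π(f) of NCA(𝒴)-prices of f is not closed in ℝ^N. -/

import Mathlib

open MeasureTheory Filter Topology

namespace CollectiveArb

variable {Ω : Type*}

/-- Terminal gains `K_i` of admissible (predictable) strategies for an agent with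
filtration `F`, trading the assets indexed by `A`, over times `1,…,T`. -/
def gainsSet {J : ℕ} (F : ℕ → MeasurableSpace Ω) (T : ℕ)
    (A : Finset (Fin J)) (X : Fin J → ℕ → Ω → ℝ) : Set (Ω → ℝ) :=
  { g | ∃ H : Fin J → ℕ → Ω → ℝ,
      (∀ j ∈ A, ∀ s, 1 ≤ s → s ≤ T → Measurable[F (s - 1)] (H j s)) ∧
      g = fun ω => ∑ j ∈ A, ∑ s ∈ Finset.Icc 1 T, H j s ω * (X j s ω - X j (s - 1) ω) }

/-- No collective arbitrage for the gains sets `K` and the exchange set `Y`: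
`(K₁ × ⋯ × K_N + Y) ∩ L⁰₊ = {0}`. -/
def NCA {N : ℕ} [MeasurableSpace Ω] (P : Measure Ω)
    (K : Fin N → Set (Ω → ℝ)) (Y : Set (Fin N → Ω → ℝ)) : Prop :=
  ∀ k : Fin N → Ω → ℝ, ∀ y ∈ Y, (∀ i, k i ∈ K i) →
    (∀ i, ∀ᵐ ω ∂P, 0 ≤ k i ω + y i ω) →
    ∀ i, (fun ω => k i ω + y i ω) =ᵐ[P] fun _ => (0 : ℝ)

/-- `K^𝒴 = ⨉ᵢ (Kᵢ − L⁰₊(ℱᵢ_T)) + 𝒴`. -/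
def KY {N : ℕ} [MeasurableSpace Ω] (P : Measure Ω)
    (FT : Fin N → MeasurableSpace Ω)
    (K : Fin N → Set (Ω → ℝ)) (Y : Set (Fin N → Ω → ℝ)) : Set (Fin N → Ω → ℝ) :=
  { f | ∃ (k l y : Fin N → Ω → ℝ), y ∈ Y ∧ (∀ i, k i ∈ K i) ∧
      (∀ i, Measurable[FT i] (l i) ∧ (∀ᵐ ω ∂P, 0 ≤ l i ω)) ∧
      ∀ i, f i = fun ω => k i ω - l i ω + y i ω }

/-- `ℝ^N_0`: zero-sum deterministic exchanges, viewed as constant random vectors. -/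
def zeroSum (Ω : Type*) (N : ℕ) : Set (Fin N → Ω → ℝ) :=
  { y | ∃ x : Fin N → ℝ, (∑ i, x i) = 0 ∧ ∀ i, y i = fun _ => x i }

/-- `span(ℝ^N_0, Y_1, …, Y_R)`: the finite-dimensional space of exchanges generated
by `ℝ^N_0` and the random vectors `Ys 1, …, Ys R`. -/
def spanExch {N R : ℕ} (Ys : Fin R → Fin N → Ω → ℝ) : Set (Fin N → Ω → ℝ) :=
  { y | ∃ (x : Fin N → ℝ) (c : Fin R → ℝ), (∑ i, x i) = 0 ∧
      ∀ i, y i = fun ω => x i + ∑ r, c r * Ys r i ω }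

/-- `span(𝒴₀ ∪ {g})` for a vector subspace `𝒴₀`. -/
def spanWith {N : ℕ} (Y0 : Set (Fin N → Ω → ℝ)) (g : Fin N → Ω → ℝ) :
    Set (Fin N → Ω → ℝ) :=
  { y | ∃ w ∈ Y0, ∃ c : ℝ, ∀ i, y i = fun ω => w i ω + c * g i ω }

/-- Equivalent martingale measures `Mᵢₑ` for the assets in `A`, w.r.t. the filtration `F`. -/
def martMeasures {J : ℕ} [MeasurableSpace Ω] (P : Measure Ω)
    (F : ℕ → MeasurableSpace Ω) (T : ℕ) (A : Finset (Fin J))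
    (X : Fin J → ℕ → Ω → ℝ) : Set (Measure Ω) :=
  { Q | IsProbabilityMeasure Q ∧ Q ≪ P ∧ P ≪ Q ∧
      ∀ j ∈ A, (∀ t, t ≤ T → Integrable (X j t) Q) ∧
        ∀ s t, s ≤ t → t ≤ T → X j s =ᵐ[Q] Q[X j t | F s] }

/-- Equivalent collective martingale measures `ℳₑ(𝒴)`. -/
def MeY {J N : ℕ} [MeasurableSpace Ω] (P : Measure Ω)
    (F : Fin N → ℕ → MeasurableSpace Ω) (T : ℕ) (assets : Fin N → Finset (Fin J))
    (X : Fin J → ℕ → Ω → ℝ) (Y : Set (Fin N → Ω → ℝ)) : Set (Fin N → Measure Ω) :=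
  { Q | (∀ i, Q i ∈ martMeasures P (F i) T (assets i) X) ∧
      (∀ y ∈ Y, ∀ i, Integrable (y i) (Q i)) ∧
      ∀ y ∈ Y, (∑ i, ∫ ω, y i ω ∂(Q i)) ≤ 0 }

/-- `ℳ^φ_e(𝒴) = {Q ∈ ℳₑ(𝒴) : E_{Qⁱ}[|φⁱ|] < ∞ ∀ i}`. -/
def MeYphi {J N : ℕ} [MeasurableSpace Ω] (P : Measure Ω)
    (F : Fin N → ℕ → MeasurableSpace Ω) (T : ℕ) (assets : Fin N → Finset (Fin J))
    (X : Fin J → ℕ → Ω → ℝ) (Y : Set (Fin N → Ω → ℝ))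
    (φ : Fin N → Ω → ℝ) : Set (Fin N → Measure Ω) :=
  { Q | Q ∈ MeY P F T assets X Y ∧ ∀ i, Integrable (φ i) (Q i) }

/-- Closedness of a set of random vectors under componentwise `P`-a.s. convergence
of sequences (within `L⁰(Ω, 𝐅_T, P)`). -/
def ClosedAS {N : ℕ} [MeasurableSpace Ω] (P : Measure Ω)
    (FT : Fin N → MeasurableSpace Ω) (S : Set (Fin N → Ω → ℝ)) : Prop :=
  ∀ (f : ℕ → Fin N → Ω → ℝ) (g : Fin N → Ω → ℝ),
    (∀ n, f n ∈ S) → (∀ i, Measurable[FT i] (g i)) →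
    (∀ i, ∀ᵐ ω ∂P, Tendsto (fun n => f n i ω) atTop (𝓝 (g i ω))) →
    g ∈ S

/-- Collective superhedging price `ρ^𝒴₊(f)` (with `inf ∅ = +∞`). -/
noncomputable def rhoPlus {N : ℕ} [MeasurableSpace Ω] (P : Measure Ω)
    (K : Fin N → Set (Ω → ℝ)) (Y : Set (Fin N → Ω → ℝ))
    (f : Fin N → Ω → ℝ) : EReal :=
  sInf { z : EReal | ∃ m : Fin N → ℝ, z = ((∑ i, m i : ℝ) : EReal) ∧
      ∃ k : Fin N → Ω → ℝ, (∀ i, k i ∈ K i) ∧ ∃ y ∈ Y,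
        ∀ i, ∀ᵐ ω ∂P, f i ω ≤ m i + k i ω + y i ω }

/-- Collective subhedging price `ρ^𝒴₋(f)` (with `sup ∅ = −∞`). -/
noncomputable def rhoMinus {N : ℕ} [MeasurableSpace Ω] (P : Measure Ω)
    (K : Fin N → Set (Ω → ℝ)) (Y : Set (Fin N → Ω → ℝ))
    (f : Fin N → Ω → ℝ) : EReal :=
  sSup { z : EReal | ∃ m : Fin N → ℝ, z = ((∑ i, m i : ℝ) : EReal) ∧
      ∃ k : Fin N → Ω → ℝ, (∀ i, k i ∈ K i) ∧ ∃ y ∈ Y,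
        ∀ i, ∀ᵐ ω ∂P, m i + k i ω - y i ω ≤ f i ω }

/-- `ρ^𝒴₊(f)` is attained. -/
def rhoPlusAttained {N : ℕ} [MeasurableSpace Ω] (P : Measure Ω)
    (K : Fin N → Set (Ω → ℝ)) (Y : Set (Fin N → Ω → ℝ))
    (f : Fin N → Ω → ℝ) : Prop :=
  ∃ (m : Fin N → ℝ) (k y : Fin N → Ω → ℝ), y ∈ Y ∧ (∀ i, k i ∈ K i) ∧
    (∀ i, ∀ᵐ ω ∂P, f i ω ≤ m i + k i ω + y i ω) ∧
    rhoPlus P K Y f = ((∑ i, m i : ℝ) : EReal)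

/-- `ρ^𝒴₋(f)` is attained. -/
def rhoMinusAttained {N : ℕ} [MeasurableSpace Ω] (P : Measure Ω)
    (K : Fin N → Set (Ω → ℝ)) (Y : Set (Fin N → Ω → ℝ))
    (f : Fin N → Ω → ℝ) : Prop :=
  ∃ (m : Fin N → ℝ) (k y : Fin N → Ω → ℝ), y ∈ Y ∧ (∀ i, k i ∈ K i) ∧
    (∀ i, ∀ᵐ ω ∂P, m i + k i ω - y i ω ≤ f i ω) ∧
    rhoMinus P K Y f = ((∑ i, m i : ℝ) : EReal)

/-- `f` is `𝒴`-collectively replicable: `f ∈ ℝ^N + (K₁ × ⋯ × K_N) + 𝒴` in `L⁰`. -/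
def Replicable {N : ℕ} [MeasurableSpace Ω] (P : Measure Ω)
    (K : Fin N → Set (Ω → ℝ)) (Y : Set (Fin N → Ω → ℝ))
    (f : Fin N → Ω → ℝ) : Prop :=
  ∃ (m : Fin N → ℝ) (k y : Fin N → Ω → ℝ), y ∈ Y ∧ (∀ i, k i ∈ K i) ∧
    ∀ i, f i =ᵐ[P] fun ω => m i + k i ω + y i ω


/-- Terminal gains of predictable strategies in the extended market consisting of the
assets in `A` together with one additional asset `Z`. -/
def extGainsSet {J : ℕ} (F : ℕ → MeasurableSpace Ω) (T : ℕ)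
    (A : Finset (Fin J)) (X : Fin J → ℕ → Ω → ℝ) (Z : ℕ → Ω → ℝ) : Set (Ω → ℝ) :=
  { g | ∃ (H : Fin J → ℕ → Ω → ℝ) (G : ℕ → Ω → ℝ),
      (∀ j ∈ A, ∀ s, 1 ≤ s → s ≤ T → Measurable[F (s - 1)] (H j s)) ∧
      (∀ s, 1 ≤ s → s ≤ T → Measurable[F (s - 1)] (G s)) ∧
      g = fun ω => (∑ j ∈ A, ∑ s ∈ Finset.Icc 1 T, H j s ω * (X j s ω - X j (s - 1) ω))
        + ∑ s ∈ Finset.Icc 1 T, G s ω * (Z s ω - Z (s - 1) ω) }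

/-- `π ∈ ℝ^N` is an NCA(𝒴)-price for the claims `f = (f¹,…,f^N)`: there are
`𝔽ⁱ`-adapted processes `Zⁱ` (the new assets `X^{J+i}`) with `Zⁱ_0 = πⁱ`, `Zⁱ_T = fⁱ`,
such that NCA(𝒴) holds in the extended market where agent `i` trades the assets in
`(i) ∪ {J+i}`. -/
def IsNCAPrice {J N : ℕ} [MeasurableSpace Ω] (P : Measure Ω)
    (F : Fin N → ℕ → MeasurableSpace Ω) (T : ℕ) (assets : Fin N → Finset (Fin J))
    (X : Fin J → ℕ → Ω → ℝ) (Y : Set (Fin N → Ω → ℝ))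
    (f : Fin N → Ω → ℝ) (pi : Fin N → ℝ) : Prop :=
  ∃ Z : Fin N → ℕ → Ω → ℝ,
    (∀ i t, t ≤ T → Measurable[F i t] (Z i t)) ∧
    (∀ i, Z i 0 =ᵐ[P] fun _ => pi i) ∧
    (∀ i, Z i T =ᵐ[P] f i) ∧
    NCA P (fun i => extGainsSet (F i) T (assets i) X (Z i)) Y

/-- Classical single-agent super-replication price `ρ_{i,+}` (with `inf ∅ = +∞`). -/
noncomputable def rhoIPlus [MeasurableSpace Ω] (P : Measure Ω)
    (Ki : Set (Ω → ℝ)) (g : Ω → ℝ) : EReal :=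
  sInf { z : EReal | ∃ m : ℝ, z = (m : EReal) ∧ ∃ k ∈ Ki, ∀ᵐ ω ∂P, g ω ≤ m + k ω }

section Trades

variable {E : Type*}

/-- The gains from finitely many elementary trades: a pair `(G, D)` stands for a payoff `D` of
which any `G`-measurable quantity may be bought. -/
def tradeGains (L : List (MeasurableSpace E × (E → ℝ))) : AddSubmonoid (E → ℝ) :=
  AddSubmonoid.closure {g | ∃ p ∈ L, ∃ h : E → ℝ, Measurable[p.1] h ∧ g = h * p.2}

lemma mul_mem_tradeGains {L : List (MeasurableSpace E × (E → ℝ))}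
    {p : MeasurableSpace E × (E → ℝ)} (hp : p ∈ L) {h : E → ℝ} (hh : Measurable[p.1] h) :
    h * p.2 ∈ tradeGains L :=
  AddSubmonoid.subset_closure ⟨p, hp, h, hh, rfl⟩

lemma tradeGains_le {L : List (MeasurableSpace E × (E → ℝ))} {S : AddSubmonoid (E → ℝ)}
    (hS : ∀ p ∈ L, ∀ h : E → ℝ, Measurable[p.1] h → h * p.2 ∈ S) : tradeGains L ≤ S := by
  refine AddSubmonoid.closure_le.2 ?_
  rintro _ ⟨p, hp, h, hh, rfl⟩
  exact hS p hp h hh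

lemma tradeGains_mono {L L' : List (MeasurableSpace E × (E → ℝ))} (hL : L ⊆ L') :
    tradeGains L ≤ tradeGains L' :=
  tradeGains_le fun _ hp _ hh => mul_mem_tradeGains (hL hp) hh

lemma mem_tradeGains_nil {g : E → ℝ} : g ∈ tradeGains ([] : List (MeasurableSpace E × _)) ↔
    g = 0 := by
  simp [tradeGains]

lemma mem_tradeGains_cons {L : List (MeasurableSpace E × (E → ℝ))}
    {p : MeasurableSpace E × (E → ℝ)} {g : E → ℝ} :
    g ∈ tradeGains (p :: L) ↔
      ∃ h : E → ℝ, Measurable[p.1] h ∧ ∃ k ∈ tradeGains L, g = h * p.2 + k := by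
  constructor
  · intro hg
    induction hg using AddSubmonoid.closure_induction with
    | mem g hg =>
      obtain ⟨q, hq, h, hh, rfl⟩ := hg
      rcases List.mem_cons.1 hq with rfl | hq
      · exact ⟨h, hh, 0, zero_mem _, by simp⟩
      · exact ⟨0, @measurable_const _ _ _ p.1 0, h * q.2, mul_mem_tradeGains hq hh, by simp⟩
    | zero => exact ⟨0, @measurable_const _ _ _ p.1 0, 0, zero_mem _, by simp⟩
    | add g g' _ _ ih ih' =>
      obtain ⟨h, hh, k, hk, rfl⟩ := ih
      obtain ⟨h', hh', k', hk', rfl⟩ := ih'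
      refine ⟨h + h', ?_, k + k', add_mem hk hk', by ring⟩
      let := p.1
      exact hh.add hh'
  · rintro ⟨h, hh, k, hk, rfl⟩
    exact add_mem (mul_mem_tradeGains List.mem_cons_self hh)
      (tradeGains_mono (List.subset_cons_self _ _) hk)

lemma tradeGains_paste {G : MeasurableSpace E} {τ : E → ℕ} (hτ : Measurable[G] τ)
    {L : List (MeasurableSpace E × (E → ℝ))} (hL : ∀ p ∈ L, G ≤ p.1) {k : ℕ → E → ℝ}
    (hk : ∀ n, k n ∈ tradeGains L) : (fun x => k (τ x) x) ∈ tradeGains L := by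
  induction L generalizing k with
  | nil =>
    simp only [mem_tradeGains_nil] at hk ⊢
    ext x
    simp [hk]
  | cons p L ih =>
    simp only [mem_tradeGains_cons] at hk
    choose h hh r hr hk using hk
    refine mem_tradeGains_cons.2 ⟨fun x => h (τ x) x, ?_, fun x => r (τ x) x,
      ih (fun q hq => hL q (List.mem_cons_of_mem _ hq)) hr, ?_⟩
    · have hτ' : Measurable[p.1] τ := hτ.mono (hL p List.mem_cons_self) le_rfl
      let := p.1
      exact (measurable_from_prod_countable_right (f := fun q : ℕ × E => h q.1 q.2) hh).comp
        (hτ'.prodMk measurable_id)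
    · ext x
      simp [hk]

lemma tradeGains_mul {G : MeasurableSpace E} {c : E → ℝ} (hc : Measurable[G] c)
    {L : List (MeasurableSpace E × (E → ℝ))} (hL : ∀ p ∈ L, G ≤ p.1) {k : E → ℝ}
    (hk : k ∈ tradeGains L) : c * k ∈ tradeGains L := by
  induction L generalizing k with
  | nil =>
    simp only [mem_tradeGains_nil] at hk ⊢
    simp [hk]
  | cons p L ih =>
    obtain ⟨h, hh, r, hr, rfl⟩ := mem_tradeGains_cons.1 hk
    refine mem_tradeGains_cons.2 ⟨c * h, ?_, c * r,
      ih (fun q hq => hL q (List.mem_cons_of_mem _ hq)) hr, by ring⟩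
    have hc' : Measurable[p.1] c := hc.mono (hL p List.mem_cons_self) le_rfl
    let := p.1
    exact hc'.mul hh

lemma tradeGains_smul (c : ℝ) {L : List (MeasurableSpace E × (E → ℝ))} {k : E → ℝ}
    (hk : k ∈ tradeGains L) : c • k ∈ tradeGains L := by
  have := tradeGains_mul (G := ⊥) (@measurable_const _ _ _ ⊥ c) (fun _ _ => bot_le) hk
  exact this

/-- A uniformly bounded sequence of measurable functions converges along a measurable random
sequence of indices tending to infinity. -/
lemma exists_measurable_random_subseq [MeasurableSpace E] {u : ℕ → E → ℝ}
    (hu : ∀ n, Measurable (u n)) (hb : ∀ n x, |u n x| ≤ 1) :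
    ∃ (v : E → ℝ) (τ : ℕ → E → ℕ), Measurable v ∧ (∀ k, Measurable (τ k)) ∧
      (∀ k x, k ≤ τ k x) ∧ ∀ x, Tendsto (fun k => u (τ k x) x) atTop (𝓝 (v x)) := by
  classical
  set v : E → ℝ := fun x => limsup (fun n => u n x) atTop with hv
  have hvm : Measurable v := Measurable.limsup hu
  have hex : ∀ (k : ℕ) (x : E), ∃ n, k ≤ n ∧ |u n x - v x| < 1 / ((k : ℝ) + 1) := by
    intro k x
    have hε : 0 < 1 / ((k : ℝ) + 1) := Nat.one_div_pos_of_nat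
    have hbdd : IsBoundedUnder (· ≤ ·) atTop fun n => u n x :=
      isBoundedUnder_of ⟨1, fun n => (abs_le.1 (hb n x)).2⟩
    have hcob : IsCoboundedUnder (· ≤ ·) atTop fun n => u n x :=
      (isBoundedUnder_of ⟨-1, fun n => (abs_le.1 (hb n x)).1⟩ :
        IsBoundedUnder (· ≥ ·) atTop fun n => u n x).isCoboundedUnder_le
    have h1 : ∃ᶠ n in atTop, v x - 1 / ((k : ℝ) + 1) < u n x :=
      frequently_lt_of_lt_limsup hcob (by simpa [hv] using hε)
    have h2 : ∀ᶠ n in atTop, u n x < v x + 1 / ((k : ℝ) + 1) :=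
      eventually_lt_of_limsup_lt (by simpa [hv] using hε) hbdd
    obtain ⟨n, hn, hn2, hn3⟩ := (h1.and_eventually (h2.and (eventually_ge_atTop k))).exists
    exact ⟨n, hn3, abs_lt.2 ⟨by linarith, by linarith⟩⟩
  refine ⟨v, fun k x => Nat.find (hex k x), hvm, fun k => ?_,
    fun k x => (Nat.find_spec (hex k x)).1, fun x => ?_⟩
  · refine measurable_find (hex k) fun n => ?_
    exact (MeasurableSet.const _).inter
      (measurableSet_lt ((hu n).sub hvm).abs measurable_const)
  · rw [tendsto_iff_dist_tendsto_zero]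
    refine squeeze_zero (fun _ => dist_nonneg) (fun k => ?_)
      tendsto_one_div_add_atTop_nhds_zero_nat
    exact (Nat.find_spec (hex k x)).2.le

/-- Under no arbitrage, the super-replicable payoffs are closed under a.e. convergence. -/
lemma superreplicable_closed [MeasurableSpace E] {μ : Measure E}
    {L : List (MeasurableSpace E × (E → ℝ))} (hL : L.Pairwise fun p q => p.1 ≤ q.1)
    (hNA : ∀ k ∈ tradeGains L, 0 ≤ᵐ[μ] k → k =ᵐ[μ] 0)
    {g : ℕ → E → ℝ} {g' : E → ℝ} (hg : ∀ n, ∃ k ∈ tradeGains L, g n ≤ᵐ[μ] k)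
    (hlim : ∀ᵐ x ∂μ, Tendsto (fun n => g n x) atTop (𝓝 (g' x))) :
    ∃ k ∈ tradeGains L, g' ≤ᵐ[μ] k := by
  induction L generalizing g g' with
  | nil =>
    refine ⟨0, zero_mem _, ?_⟩
    have : ∀ n, g n ≤ᵐ[μ] 0 := fun n => by
      obtain ⟨k, hk, hgk⟩ := hg n
      rwa [mem_tradeGains_nil.1 hk] at hgk
    filter_upwards [ae_all_iff.2 this, hlim] with x hx hl
    exact le_of_tendsto' hl hx
  | cons p L ih =>
    obtain ⟨G, D⟩ := p
    rw [List.pairwise_cons] at hL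
    obtain ⟨hGL, hL⟩ := hL
    have hGL : ∀ p ∈ L, G ≤ p.1 := hGL
    have hNA' : ∀ k ∈ tradeGains L, 0 ≤ᵐ[μ] k → k =ᵐ[μ] 0 := fun k hk =>
      hNA k (tradeGains_mono (List.subset_cons_self _ _) hk)
    replace ih := @ih hL hNA'
    choose K hK hgK using hg
    simp only [mem_tradeGains_cons] at hK
    choose h hh r hr hK using hK
    have hh : ∀ n, Measurable[G] (h n) := hh
    have hpos : ∀ n x, 0 < 1 + |h n x| := fun n x => by positivity
    have hum : ∀ n, Measurable[G] fun x => h n x / (1 + |h n x|) := by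
      let := G
      intro n
      exact (hh n).div ((hh n).abs.const_add 1)
    have hub : ∀ n x, |h n x / (1 + |h n x|)| = 1 - 1 / (1 + |h n x|) := by
      intro n x
      have := hpos n x
      rw [abs_div, abs_of_pos this]
      field_simp
      ring
    obtain ⟨u, τ, hu, hτ, hτk, hτu⟩ := @exists_measurable_random_subseq E G
      (fun n x => h n x / (1 + |h n x|)) hum (fun n x => by
        rw [hub]
        have : 0 < 1 / (1 + |h n x|) := one_div_pos.2 (hpos n x)
        linarith)
    have hv : ∀ x, Tendsto (fun k => 1 / (1 + |h (τ k x) x|)) atTop (𝓝 (1 - |u x|)) := by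
      intro x
      have := ((hτu x).abs.const_sub 1)
      simp only [hub, sub_sub_cancel] at this
      exact this
    have hv0 : ∀ x, 0 ≤ 1 - |u x| := fun x =>
      ge_of_tendsto' (hv x) fun k => (one_div_pos.2 (hpos _ x)).le
    -- the normalised limit payoff
    obtain ⟨r', hr', hgr'⟩ : ∃ k ∈ tradeGains L,
        (fun x => (1 - |u x|) * g' x - u x * D x) ≤ᵐ[μ] k := by
      refine ih (g := fun k x => (1 / (1 + |h (τ k x) x|)) * g (τ k x) x
        - h (τ k x) x / (1 + |h (τ k x) x|) * D x) (fun k => ?_) ?_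
      · refine ⟨fun x => (fun n x => (1 / (1 + |h n x|)) * r n x) (τ k x) x,
          tradeGains_paste (k := fun n x => (1 / (1 + |h n x|)) * r n x) (hτ k) hGL
            (fun n => ?_), ?_⟩
        · refine tradeGains_mul (G := G) ?_ hGL (hr n)
          let := G
          exact measurable_const.div ((hh n).abs.const_add 1)
        · filter_upwards [ae_all_iff.2 hgK] with x hx
          have h1 := hx (τ k x)
          rw [hK] at h1
          simp only [Pi.add_apply, Pi.mul_apply] at h1
          have h2 := mul_le_mul_of_nonneg_left h1 (one_div_pos.2 (hpos (τ k x) x)).le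
          have h3 : h (τ k x) x / (1 + |h (τ k x) x|) * D x
              = 1 / (1 + |h (τ k x) x|) * (h (τ k x) x * D x) := by ring
          simp only [h3]
          linarith
      · filter_upwards [hlim] with x hx
        exact ((hv x).mul (hx.comp (tendsto_atTop_mono (fun k => hτk k x) tendsto_id))).sub
          ((hτu x).mul_const _)
    -- the event on which the position in `D` degenerates
    set B : Set E := {x | |u x| = 1} with hB
    have hBm : MeasurableSet[G] B := by
      let := G
      exact measurableSet_eq_fun hu.abs measurable_const
    have h1B : Measurable[G] (B.indicator (1 : E → ℝ)) :=
      (@measurable_const _ _ _ G (1 : ℝ)).indicator hBm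
    have hBzero : (B.indicator (1 : E → ℝ)) * u * D + B.indicator (1 : E → ℝ) * r' =ᵐ[μ] 0 := by
      refine hNA _ (mem_tradeGains_cons.2 ⟨B.indicator 1 * u, ?_, _,
        tradeGains_mul h1B hGL hr', rfl⟩) ?_
      · let := G
        exact h1B.mul hu
      · filter_upwards [hgr'] with x hx
        by_cases hxB : x ∈ B
        · have : |u x| = 1 := hxB
          simp only [this, sub_self, zero_mul] at hx
          simp only [Pi.zero_apply, Pi.add_apply, Pi.mul_apply, Set.indicator_of_mem hxB,
            Pi.one_apply, one_mul]
          linarith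
        · simp [hxB]
    obtain ⟨s, hs, hgs⟩ : ∃ k ∈ tradeGains L, B.indicator 1 * g' ≤ᵐ[μ] k := by
      refine ih (g := fun n => B.indicator 1 * g n) (fun n => ?_) ?_
      · refine ⟨(-(B.indicator 1 * h n * u)) * r' + B.indicator 1 * r n,
          add_mem (tradeGains_mul (G := G) ?_ hGL hr') (tradeGains_mul h1B hGL (hr n)), ?_⟩
        · let := G
          exact ((h1B.mul (hh n)).mul hu).neg
        · filter_upwards [hgK n, hBzero] with x hx hx0
          by_cases hxB : x ∈ B
          · have h1 : u x * u x = 1 := by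
              have : |u x| = 1 := hxB
              rw [← abs_mul_abs_self, this, one_mul]
            simp only [hK, Pi.zero_apply, Pi.add_apply, Pi.mul_apply, Set.indicator_of_mem hxB,
              Pi.one_apply, one_mul, Pi.neg_apply] at hx hx0 ⊢
            have h2 : h n x * D x = -(h n x * u x) * r' x := by
              have h3 : u x * (u x * D x + r' x) = 0 := by rw [hx0, mul_zero]
              have h4 : D x = -(u x * r' x) := by
                have : u x * (u x * D x + r' x) = (u x * u x) * D x + u x * r' x := by ring
                rw [this, h1] at h3
                linarith
              rw [h4]
              ring
            linarith
          · simp [hxB]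
      · filter_upwards [hlim] with x hx
        exact hx.const_mul _
    have h1Bc : Measurable[G] (Bᶜ.indicator (fun x => (1 - |u x|)⁻¹)) := by
      let := G
      exact (measurable_const.sub hu.abs).inv.indicator hBm.compl
    refine ⟨_, mem_tradeGains_cons.2 ⟨Bᶜ.indicator (fun x => (1 - |u x|)⁻¹) * u, ?_,
      Bᶜ.indicator (fun x => (1 - |u x|)⁻¹) * r' + B.indicator 1 * s,
      add_mem (tradeGains_mul h1Bc hGL hr') (tradeGains_mul h1B hGL hs), rfl⟩, ?_⟩
    · let := G
      exact h1Bc.mul hu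
    · filter_upwards [hgr', hgs] with x hx hxs
      by_cases hxB : x ∈ B
      · have hxB' : x ∉ Bᶜ := fun h => h hxB
        simpa [hxB] using hxs
      · have hxB' : x ∈ Bᶜ := hxB
        have hlt : 0 < 1 - |u x| :=
          lt_of_le_of_ne (hv0 x) fun h => hxB (show |u x| = 1 by linarith)
        simp only [Pi.add_apply, Pi.mul_apply, Set.indicator_of_mem hxB',
          Set.indicator_of_notMem hxB, zero_mul, add_zero]
        have h1 : g' x * (1 - |u x|) ≤ u x * D x + r' x := by linarith
        calc g' x = (1 - |u x|)⁻¹ * (g' x * (1 - |u x|)) := by field_simp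
          _ ≤ (1 - |u x|)⁻¹ * (u x * D x + r' x) :=
            mul_le_mul_of_nonneg_left h1 (inv_pos.2 hlt).le
          _ = _ := by ring

/-- Gains from conditionally centred trades which are bounded below by an integrable function
are integrable and centred. -/
lemma integral_tradeGains_eq_zero [m : MeasurableSpace E] {Q : Measure E} [IsFiniteMeasure Q]
    {L : List (MeasurableSpace E × (E → ℝ))} (hL : L.Pairwise fun p q => p.1 ≤ q.1)
    (hLm : ∀ p ∈ L, p.1 ≤ m ∧ Integrable p.2 Q ∧ Q[p.2 | p.1] =ᵐ[Q] 0)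
    {k w : E → ℝ} (hk : k ∈ tradeGains L) (hw : Integrable w Q) (hkw : ∀ᵐ x ∂Q, -w x ≤ k x) :
    Integrable k Q ∧ ∫ x, k x ∂Q = 0 := by
  induction L generalizing k w with
  | nil =>
    rw [mem_tradeGains_nil.1 hk]
    exact ⟨integrable_zero _ _ _, by simp⟩
  | cons p L ih =>
    rw [List.pairwise_cons] at hL
    obtain ⟨hGL, hL⟩ := hL
    replace ih := @ih hL fun p hp => hLm p (List.mem_cons_of_mem _ hp)
    obtain ⟨hG, hD, hD0⟩ := hLm _ List.mem_cons_self
    obtain ⟨h, hh, r, hr, rfl⟩ := mem_tradeGains_cons.1 hk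
    set A : ℕ → Set E := fun n => {x | |h x| ≤ n} with hA
    have hAm : ∀ n, MeasurableSet[p.1] (A n) := fun n => by
      let := p.1
      exact measurableSet_le hh.abs measurable_const
    have hcover : AECover Q atTop A :=
      { ae_eventually_mem := by
          refine ae_of_all _ fun x => ?_
          obtain ⟨n, hn⟩ := exists_nat_ge |h x|
          filter_upwards [eventually_ge_atTop n] with i hi
          exact hn.trans (by exact_mod_cast hi)
        measurableSet := fun n => hG _ (hAm n) }
    have hhA : ∀ n, Measurable[p.1] ((A n).indicator h) := fun n => hh.indicator (hAm n)
    have hbound : ∀ n x, |(A n).indicator h x| ≤ n := fun n x => by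
      by_cases hx : x ∈ A n
      · rw [Set.indicator_of_mem hx]
        exact hx
      · simp [hx]
    have hint1 : ∀ n, Integrable ((A n).indicator h * p.2) Q := fun n =>
      hD.bdd_mul ((hhA n).mono hG le_rfl).aestronglyMeasurable
        (ae_of_all _ fun x => by simpa using hbound n x)
    have hzero1 : ∀ n, ∫ x, ((A n).indicator h * p.2) x ∂Q = 0 := fun n => by
      rw [← integral_condExp hG]
      have h1 := condExp_stronglyMeasurable_mul_of_bound hG (hhA n).stronglyMeasurable hD n
        (ae_of_all Q fun x => by simpa using hbound n x)
      refine integral_eq_zero_of_ae (h1.trans ?_)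
      filter_upwards [hD0] with x hx
      simp [hx]
    have h2 : ∀ n, Integrable ((A n).indicator (1 : E → ℝ) * r) Q ∧
        ∫ x, ((A n).indicator (1 : E → ℝ) * r) x ∂Q = 0 := by
      intro n
      refine ih (w := fun x => |w x| + n * |p.2 x|) (tradeGains_mul
        ((@measurable_const _ _ _ p.1 (1 : ℝ)).indicator (hAm n)) hGL hr)
        (hw.abs.add (hD.abs.const_mul _)) ?_
      filter_upwards [hkw] with x hx
      by_cases hxA : x ∈ A n
      · have h1 : |h x| ≤ n := hxA
        have h3 : |h x * p.2 x| ≤ n * |p.2 x| := by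
          rw [abs_mul]
          exact mul_le_mul_of_nonneg_right h1 (abs_nonneg _)
        simp only [Pi.add_apply, Pi.mul_apply] at hx
        simp only [Pi.mul_apply, Set.indicator_of_mem hxA, Pi.one_apply, one_mul]
        have := le_abs_self (h x * p.2 x)
        have := le_abs_self (w x)
        linarith
      · simp only [Pi.mul_apply, Set.indicator_of_notMem hxA, zero_mul]
        have : 0 ≤ |w x| + n * |p.2 x| := by positivity
        linarith
    have hsplit : ∀ n, (A n).indicator (h * p.2 + r)
        = (A n).indicator h * p.2 + (A n).indicator (1 : E → ℝ) * r := fun n => by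
      ext x
      by_cases hx : x ∈ A n <;> simp [hx]
    have hon : ∀ n, IntegrableOn (h * p.2 + r) (A n) Q := fun n => by
      rw [← integrable_indicator_iff (hG _ (hAm n)), hsplit]
      exact (hint1 n).add (h2 n).1
    have hon0 : ∀ n, ∫ x in A n, (h * p.2 + r) x ∂Q = 0 := fun n => by
      rw [← integral_indicator (hG _ (hAm n)), hsplit]
      simp only [Pi.add_apply]
      rw [integral_add (hint1 n) (h2 n).1, hzero1, (h2 n).2, add_zero]
    have hk' : Integrable (fun x => (h * p.2 + r) x + |w x|) Q := by
      refine hcover.integrable_of_integral_bounded_of_nonneg_ae (∫ x, |w x| ∂Q)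
        (fun n => (hon n).add hw.abs.integrableOn) ?_ (Eventually.of_forall fun n => ?_)
      · filter_upwards [hkw] with x hx
        have := le_abs_self (w x)
        linarith
      · rw [integral_add (hon n) hw.abs.integrableOn, hon0, zero_add]
        exact setIntegral_le_integral hw.abs (ae_of_all _ fun x => abs_nonneg _)
    have hkint : Integrable (h * p.2 + r) Q := by
      have := hk'.sub hw.abs
      refine this.congr (ae_of_all _ fun x => ?_)
      simp
    refine ⟨hkint, ?_⟩
    have := hcover.integral_tendsto_of_countably_generated hkint
    simp only [hon0] at this
    exact (tendsto_nhds_unique this tendsto_const_nhds)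

end Trades

section PricingDensities

variable {E : Type*} [m : MeasurableSpace E]

/-- The square-integrable functionals which are nonpositive on the super-replicable payoffs. -/
def pricingDensities (μ : Measure E) (L : List (MeasurableSpace E × (E → ℝ))) :
    Set (Lp ℝ 2 μ) :=
  {z | ∀ c : Lp ℝ 2 μ, (∃ k ∈ tradeGains L, c ≤ᵐ[μ] k) → inner ℝ c z ≤ 0}

variable {μ : Measure E} {L : List (MeasurableSpace E × (E → ℝ))}

lemma pricingDensities_nonneg {z : Lp ℝ 2 μ} (hz : z ∈ pricingDensities μ L) : 0 ≤ᵐ[μ] z := by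
  have hinf := Lp.coeFn_inf z 0
  have h0 := Lp.coeFn_zero ℝ 2 μ
  have h1 : inner ℝ (z ⊓ 0) z ≤ 0 := by
    refine hz _ ⟨0, zero_mem _, ?_⟩
    filter_upwards [hinf, h0] with x hx hx0
    rw [hx, Pi.inf_apply, hx0]
    exact inf_le_right
  have h2 : inner ℝ (z ⊓ 0) z = inner ℝ (z ⊓ 0) (z ⊓ 0) := by
    rw [L2.inner_def, L2.inner_def]
    refine integral_congr_ae ?_
    filter_upwards [hinf, h0] with x hx hx0
    rw [hx, Pi.inf_apply, hx0]
    rcases le_total (z x) 0 with h | h <;> simp [h]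
  have h3 : z ⊓ 0 = 0 := by
    rw [h2] at h1
    exact real_inner_self_nonpos.1 h1
  rw [h3] at hinf
  filter_upwards [hinf, h0] with x hx hx0
  rw [hx0, Pi.inf_apply, hx0] at hx
  exact inf_eq_right.1 hx.symm

lemma add_mem_pricingDensities {z z' : Lp ℝ 2 μ} (hz : z ∈ pricingDensities μ L)
    (hz' : z' ∈ pricingDensities μ L) : z + z' ∈ pricingDensities μ L := fun c hc => by
  rw [inner_add_right]
  exact add_nonpos (hz c hc) (hz' c hc)

lemma smul_mem_pricingDensities {z : Lp ℝ 2 μ} (hz : z ∈ pricingDensities μ L) {a : ℝ}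
    (ha : 0 ≤ a) : a • z ∈ pricingDensities μ L := fun c hc => by
  rw [inner_smul_right]
  exact mul_nonpos_of_nonneg_of_nonpos ha (hz c hc)

lemma exists_pricingDensity_pos_inner (hL : L.Pairwise fun p q => p.1 ≤ q.1)
    (hNA : ∀ k ∈ tradeGains L, 0 ≤ᵐ[μ] k → k =ᵐ[μ] 0) {g : Lp ℝ 2 μ}
    (hg : ¬ ∃ k ∈ tradeGains L, g ≤ᵐ[μ] k) :
    ∃ z ∈ pricingDensities μ L, 0 < inner ℝ g z := by
  let C : ProperCone ℝ (Lp ℝ 2 μ) :=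
    { carrier := {c | ∃ k ∈ tradeGains L, c ≤ᵐ[μ] k}
      add_mem' := by
        rintro c c' ⟨k, hk, hck⟩ ⟨k', hk', hck'⟩
        refine ⟨k + k', add_mem hk hk', ?_⟩
        filter_upwards [Lp.coeFn_add c c', hck, hck'] with x hx h1 h2
        rw [hx]
        exact add_le_add h1 h2
      zero_mem' := ⟨0, zero_mem _, (Lp.coeFn_zero ℝ 2 μ).le⟩
      smul_mem' := by
        rintro ⟨a, ha⟩ c ⟨k, hk, hck⟩
        refine ⟨a • k, tradeGains_smul a hk, ?_⟩
        filter_upwards [Lp.coeFn_smul a c, hck] with x hx h1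
        change (a • c : Lp ℝ 2 μ) x ≤ _
        rw [hx]
        exact mul_le_mul_of_nonneg_left h1 ha
      isClosed' := by
        refine IsSeqClosed.isClosed fun c c' hc hlim => ?_
        obtain ⟨ns, -, hns⟩ := (tendstoInMeasure_of_tendsto_Lp hlim).exists_seq_tendsto_ae
        exact superreplicable_closed hL hNA (fun n => hc (ns n)) hns }
  obtain ⟨z, hz, hgz⟩ := C.hyperplane_separation' (x₀ := g) hg
  refine ⟨-z, fun c hc => ?_, ?_⟩
  · rw [inner_neg_right]
    exact neg_nonpos.2 (hz c hc)
  · rw [inner_neg_right]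
    exact neg_pos.2 hgz

lemma inner_indicator_one [IsFiniteMeasure μ] {B : Set E} (hB : MeasurableSet B) (z : Lp ℝ 2 μ) :
    inner ℝ (indicatorConstLp 2 hB (measure_ne_top μ B) (1 : ℝ)) z = ∫ x in B, z x ∂μ :=
  L2.inner_indicatorConstLp_one hB _ z

/-- Some pricing density charges a maximal set. -/
lemma exists_pricingDensity_maximal_support [IsFiniteMeasure μ] :
    ∃ z ∈ pricingDensities μ L, ∀ z' ∈ pricingDensities μ L,
      μ.real {x | 0 < z' x} ≤ μ.real {x | 0 < z x} := by
  have hmeas : ∀ z : Lp ℝ 2 μ, MeasurableSet {x | 0 < z x} := fun z =>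
    measurableSet_lt measurable_const (Lp.stronglyMeasurable z).measurable
  set V : Set ℝ := (fun z : Lp ℝ 2 μ => μ.real {x | 0 < z x}) '' pricingDensities μ L
  have hne : V.Nonempty := ⟨_, 0, fun c _ => by simp, rfl⟩
  have hbdd : BddAbove V := ⟨μ.real Set.univ, by
    rintro _ ⟨z, -, rfl⟩
    exact measureReal_mono (Set.subset_univ _)⟩
  obtain ⟨v, -, hv, hvV⟩ := exists_seq_tendsto_sSup hne hbdd
  choose z hz hzv using hvV
  set a : ℕ → ℝ := fun n => (1 / 2) ^ n / (1 + ‖z n‖)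
  have ha : ∀ n, 0 < a n := fun n => by positivity
  have hsum : Summable fun n => a n • z n := by
    refine Summable.of_norm_bounded summable_geometric_two fun n => ?_
    rw [norm_smul, Real.norm_of_nonneg (ha n).le, div_mul_eq_mul_div]
    refine div_le_of_le_mul₀ (by positivity) (by positivity) ?_
    gcongr
    linarith
  have hmem : ∑' n, a n • z n ∈ pricingDensities μ L := fun c hc => by
    have h1 : HasSum (fun n => inner ℝ c (a n • z n)) (inner ℝ c (∑' n, a n • z n)) :=
      hsum.hasSum.mapL (innerSL ℝ c)
    exact h1.nonpos fun n => smul_mem_pricingDensities (hz n) (ha n).le c hc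
  refine ⟨_, hmem, fun z' hz' => ?_⟩
  set y : Lp ℝ 2 μ := ∑' n, a n • z n
  have hsupp : ∀ n, μ.real {x | 0 < z n x} ≤ μ.real {x | 0 < y x} := by
    intro n
    set B : Set E := {x | 0 < y x}ᶜ
    have hB : MeasurableSet B := (hmeas y).compl
    have hnn : ∀ w ∈ pricingDensities μ L, 0 ≤ ∫ x in B, w x ∂μ := fun w hw =>
      integral_nonneg_of_ae (ae_restrict_of_ae (pricingDensities_nonneg hw))
    have h1 : HasSum (fun n => ∫ x in B, (a n • z n : Lp ℝ 2 μ) x ∂μ) (∫ x in B, y x ∂μ) := by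
      simp only [← inner_indicator_one hB]
      exact hsum.hasSum.mapL (innerSL ℝ _)
    have h2 : ∫ x in B, y x ∂μ ≤ 0 :=
      setIntegral_nonpos hB fun x hx => not_lt.1 hx
    have h3 := h1.unique (le_antisymm h2 (hnn y hmem) ▸ h1)
    rw [le_antisymm h2 (hnn y hmem)] at h1
    have h4 := (hasSum_zero_iff_of_nonneg fun n =>
      hnn _ (smul_mem_pricingDensities (hz n) (ha n).le)).1 h1
    have h5 : ∫ x in B, (a n • z n : Lp ℝ 2 μ) x ∂μ = 0 := congrFun h4 n
    rw [setIntegral_eq_zero_iff_of_nonneg_ae (ae_restrict_of_ae (pricingDensities_nonneg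
      (smul_mem_pricingDensities (hz n) (ha n).le)))
      ((Lp.memLp (a n • z n)).integrable one_le_two).integrableOn] at h5
    rw [EventuallyEq, ae_restrict_iff' hB] at h5
    refine ENNReal.toReal_mono (measure_ne_top _ _) (measure_mono_ae ?_)
    filter_upwards [h5, Lp.coeFn_smul (a n) (z n)] with x hx hxs hpos
    by_contra hB'
    have h6 := hx hB'
    rw [hxs] at h6
    exact (mul_pos (ha n) hpos).ne' h6
  have hle : sSup V ≤ μ.real {x | 0 < y x} :=
    le_of_tendsto' hv fun n => hzv n ▸ hsupp n
  exact (le_csSup hbdd ⟨z', hz', rfl⟩).trans hle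

lemma exists_pricingDensity_pos [IsFiniteMeasure μ] (hL : L.Pairwise fun p q => p.1 ≤ q.1)
    (hNA : ∀ k ∈ tradeGains L, 0 ≤ᵐ[μ] k → k =ᵐ[μ] 0) :
    ∃ z ∈ pricingDensities μ L, ∀ᵐ x ∂μ, 0 < z x := by
  obtain ⟨z, hz, hmax⟩ := exists_pricingDensity_maximal_support (μ := μ) (L := L)
  refine ⟨z, hz, ?_⟩
  have hmeas : MeasurableSet {x | 0 < z x} :=
    measurableSet_lt measurable_const (Lp.stronglyMeasurable z).measurable
  set B : Set E := {x | 0 < z x}ᶜ with hBdef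
  have hB : MeasurableSet B := hmeas.compl
  by_contra hcon
  have hμB : μ B ≠ 0 := hcon
  have hone : (indicatorConstLp 2 hB (measure_ne_top μ B) (1 : ℝ) : E → ℝ)
      =ᵐ[μ] B.indicator fun _ => 1 := indicatorConstLp_coeFn
  obtain ⟨z', hz', hpos⟩ := exists_pricingDensity_pos_inner (μ := μ)
    (g := indicatorConstLp 2 hB (measure_ne_top μ B) (1 : ℝ)) hL hNA (by
      rintro ⟨k, hk, hle⟩
      have hk0 : 0 ≤ᵐ[μ] k := by
        filter_upwards [hle, hone] with x hx hx1
        refine le_trans ?_ hx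
        rw [hx1]
        exact Set.indicator_nonneg (fun _ _ => zero_le_one) x
      refine hμB (measure_mono_null (t := {x | ¬ x ∉ B}) (fun x hx h => h hx) ?_)
      change ∀ᵐ x ∂μ, x ∉ B
      filter_upwards [hle, hone, hNA k hk hk0] with x hx hx1 hx0 hxB
      rw [hx1, hx0, Set.indicator_of_mem hxB] at hx
      exact absurd hx (by simp))
  rw [inner_indicator_one hB] at hpos
  have hz0 := pricingDensities_nonneg hz
  have hz0' := pricingDensities_nonneg hz'
  have hmore : 0 < μ (B ∩ {x | 0 < z' x}) := by
    rw [pos_iff_ne_zero]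
    intro h0
    refine hpos.ne' (setIntegral_eq_zero_of_ae_eq_zero ?_)
    have : ∀ᵐ x ∂μ, ¬ (x ∈ B ∧ 0 < z' x) := by
      rw [ae_iff]
      simp only [not_not]
      exact h0
    filter_upwards [this, hz0'] with x hx hx0 hxB
    exact le_antisymm (not_lt.1 fun h => hx ⟨hxB, h⟩) hx0
  have h1 := hmax _ (add_mem_pricingDensities hz hz')
  have hsub : μ.real ({x | 0 < z x} ∪ (B ∩ {x | 0 < z' x}))
      ≤ μ.real {x | 0 < (z + z' : Lp ℝ 2 μ) x} := by
    refine ENNReal.toReal_mono (measure_ne_top _ _) (measure_mono_ae ?_)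
    filter_upwards [Lp.coeFn_add z z', hz0, hz0'] with x hx h0 h0' hmem
    change 0 < (z + z' : Lp ℝ 2 μ) x
    rw [hx]
    rcases hmem with h | h
    · exact add_pos_of_pos_of_nonneg h h0'
    · exact add_pos_of_nonneg_of_pos h0 h.2
  rw [measureReal_union (Set.disjoint_left.2 fun x hx h => h.1 hx)
    (hB.inter (measurableSet_lt measurable_const (Lp.stronglyMeasurable z').measurable))] at hsub
  have h2 : 0 < μ.real (B ∩ {x | 0 < z' x}) := ENNReal.toReal_pos hmore.ne' (measure_ne_top _ _)
  linarith

/-- A finite measure is equivalent to a finite measure for which a given function is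
square-integrable. -/
lemma exists_equivalent_memLp_two (μ : Measure E) [IsFiniteMeasure μ] {b : E → ℝ}
    (hb : Measurable b) :
    ∃ ν : Measure E, IsFiniteMeasure ν ∧ ν ≪ μ ∧ μ ≪ ν ∧ MemLp b 2 ν := by
  have hpos : ∀ x, 0 < (1 + b x ^ 2)⁻¹ := fun x => by positivity
  have hρ : Measurable fun x => (1 + b x ^ 2)⁻¹ := ((hb.pow_const 2).const_add 1).inv
  have hle : ∀ x, (1 + b x ^ 2)⁻¹ ≤ 1 := fun x =>
    inv_le_one_of_one_le₀ (by nlinarith [sq_nonneg (b x)])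
  have hint : Integrable (fun x => (1 + b x ^ 2)⁻¹) μ :=
    Integrable.of_bound hρ.aestronglyMeasurable 1
      (ae_of_all _ fun x => by rw [Real.norm_of_nonneg (hpos x).le]; exact hle x)
  refine ⟨μ.withDensity fun x => ENNReal.ofReal (1 + b x ^ 2)⁻¹,
    isFiniteMeasure_withDensity_ofReal hint.2, withDensity_absolutelyContinuous _ _,
    withDensity_absolutelyContinuous' hρ.ennreal_ofReal.aemeasurable
      (ae_of_all _ fun x => by simpa using hpos x), ?_⟩
  rw [memLp_two_iff_integrable_sq hb.aestronglyMeasurable,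
    integrable_withDensity_iff_integrable_smul' hρ.ennreal_ofReal (ae_of_all _ fun _ => by simp)]
  refine Integrable.of_bound (by fun_prop) 1 (ae_of_all _ fun x => ?_)
  rw [ENNReal.toReal_ofReal (hpos x).le, smul_eq_mul, Real.norm_of_nonneg (by positivity),
    inv_mul_le_iff₀ (by positivity)]
  linarith

lemma exists_measurable_abs_le {g : E → ℝ} (hg : Measurable g) (hLm : ∀ p ∈ L, Measurable p.2) :
    ∃ b : E → ℝ, Measurable b ∧ (∀ x, |g x| ≤ b x) ∧ ∀ p ∈ L, ∀ x, |p.2 x| ≤ b x := by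
  induction L with
  | nil => exact ⟨fun x => |g x|, hg.abs, fun _ => le_rfl, by simp⟩
  | cons p L ih =>
    obtain ⟨b, hb, hgb, hLb⟩ := ih fun q hq => hLm q (List.mem_cons_of_mem _ hq)
    refine ⟨fun x => b x + |p.2 x|, hb.add (hLm p List.mem_cons_self).abs,
      fun x => (hgb x).trans (le_add_of_nonneg_right (abs_nonneg _)), fun q hq x => ?_⟩
    rcases List.mem_cons.1 hq with rfl | hq
    · exact le_add_of_nonneg_left ((abs_nonneg _).trans (hgb x))
    · exact (hLb q hq x).trans (le_add_of_nonneg_right (abs_nonneg _))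

/-- Under no arbitrage there is an equivalent finite measure for which all trades are
conditionally centred; it may be chosen to give positive value to a given payoff which cannot
be super-replicated at zero cost. -/
theorem exists_equivalent_pricing_measure (μ : Measure E) [IsFiniteMeasure μ]
    (hL : L.Pairwise fun p q => p.1 ≤ q.1) (hLm : ∀ p ∈ L, p.1 ≤ m ∧ Measurable p.2)
    (hNA : ∀ k ∈ tradeGains L, 0 ≤ᵐ[μ] k → k =ᵐ[μ] 0) {g : E → ℝ} (hg : Measurable g) :
    ∃ Q : Measure E, IsFiniteMeasure Q ∧ Q ≪ μ ∧ μ ≪ Q ∧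
      (∀ p ∈ L, Integrable p.2 Q ∧ Q[p.2 | p.1] =ᵐ[Q] 0) ∧ Integrable g Q ∧
      ((¬ ∃ k ∈ tradeGains L, g ≤ᵐ[μ] k) → 0 < ∫ x, g x ∂Q) := by
  obtain ⟨b, hb, hgb, hLb⟩ := exists_measurable_abs_le hg fun p hp => (hLm p hp).2
  obtain ⟨ν, hνfin, hνμ, hμν, hbν⟩ := exists_equivalent_memLp_two μ hb
  have hNA' : ∀ k ∈ tradeGains L, 0 ≤ᵐ[ν] k → k =ᵐ[ν] 0 := fun k hk h =>
    hνμ.ae_le (hNA k hk (hμν.ae_le h))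
  have hgν : MemLp g 2 ν := hbν.mono hg.aestronglyMeasurable
    (ae_of_all _ fun x => (hgb x).trans (le_abs_self _))
  have hLν : ∀ p ∈ L, MemLp p.2 2 ν := fun p hp =>
    hbν.mono (hLm p hp).2.aestronglyMeasurable
      (ae_of_all _ fun x => (hLb p hp x).trans (le_abs_self _))
  obtain ⟨z, hz, hzpos, hzg⟩ : ∃ z ∈ pricingDensities ν L, (∀ᵐ x ∂ν, 0 < z x) ∧
      ((¬ ∃ k ∈ tradeGains L, g ≤ᵐ[ν] k) → 0 < inner ℝ (hgν.toLp g) z) := by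
    obtain ⟨z, hz, hzpos⟩ := exists_pricingDensity_pos hL hNA'
    by_cases hgL : ∃ k ∈ tradeGains L, g ≤ᵐ[ν] k
    · exact ⟨z, hz, hzpos, fun h => absurd hgL h⟩
    · obtain ⟨y, hy, hgy⟩ := exists_pricingDensity_pos_inner (g := hgν.toLp g) hL hNA' (by
        rintro ⟨k, hk, hgk⟩
        exact hgL ⟨k, hk, hgν.coeFn_toLp.symm.le.trans hgk⟩)
      obtain ⟨n, hn⟩ := exists_nat_gt (-inner ℝ (hgν.toLp g) z / inner ℝ (hgν.toLp g) y)
      refine ⟨z + (n : ℝ) • y, add_mem_pricingDensities hz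
        (smul_mem_pricingDensities hy n.cast_nonneg), ?_, fun _ => ?_⟩
      · filter_upwards [hzpos, pricingDensities_nonneg hy, Lp.coeFn_add z ((n : ℝ) • y),
          Lp.coeFn_smul (n : ℝ) y] with x h1 h2 h3 h4
        rw [h3, Pi.add_apply, h4]
        exact add_pos_of_pos_of_nonneg h1 (mul_nonneg n.cast_nonneg h2)
      · rw [div_lt_iff₀ hgy] at hn
        rw [inner_add_right, inner_smul_right]
        linarith
  have hzm : AEMeasurable (fun x => ENNReal.ofReal (z x)) ν :=
    (Lp.stronglyMeasurable z).measurable.ennreal_ofReal.aemeasurable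
  have hztop : ∀ᵐ x ∂ν, ENNReal.ofReal (z x) < ⊤ := ae_of_all _ fun _ => ENNReal.ofReal_lt_top
  set Q : Measure E := ν.withDensity fun x => ENNReal.ofReal (z x)
  have hzint : Integrable z ν := (Lp.memLp z).integrable one_le_two
  have hQfin : IsFiniteMeasure Q := isFiniteMeasure_withDensity_ofReal hzint.2
  have hQν : Q ≪ ν := withDensity_absolutelyContinuous _ _
  have hνQ : ν ≪ Q := withDensity_absolutelyContinuous' hzm (by
    filter_upwards [hzpos] with x hx
    simpa using hx)
  have hint : ∀ φ : E → ℝ, MemLp φ 2 ν → Integrable φ Q := fun φ hφ => by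
    rw [integrable_withDensity_iff_integrable_smul₀' hzm hztop]
    refine ((Lp.memLp z).integrable_mul hφ).congr ?_
    filter_upwards [hzpos] with x hx
    rw [ENNReal.toReal_ofReal hx.le]
    rfl
  have hval : ∀ (φ : E → ℝ) (hφ : MemLp φ 2 ν), ∫ x, φ x ∂Q = inner ℝ (hφ.toLp φ) z :=
      fun φ hφ => by
    rw [integral_withDensity_eq_integral_toReal_smul₀ hzm hztop, L2.inner_def]
    refine integral_congr_ae ?_
    filter_upwards [hzpos, hφ.coeFn_toLp] with x hx hφx
    rw [ENNReal.toReal_ofReal hx.le, hφx]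
    simp
  refine ⟨Q, hQfin, hQν.trans hνμ, hμν.trans hνQ, fun p hp => ⟨hint _ (hLν p hp), ?_⟩,
    hint _ hgν, fun hgL => ?_⟩
  · refine (ae_eq_condExp_of_forall_setIntegral_eq (hLm p hp).1 (hint _ (hLν p hp))
      (fun _ _ _ => integrableOn_zero) (fun s hs _ => ?_) aestronglyMeasurable_zero).symm
    have hsm := (hLm p hp).1 s hs
    have hmem : MemLp (s.indicator p.2) 2 ν := (hLν p hp).indicator hsm
    rw [integral_zero, ← integral_indicator hsm, hval _ hmem]
    have hone : ∀ a : ℝ, a • s.indicator p.2 ∈ tradeGains L := fun a => by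
      have h1 : Measurable[p.1] (s.indicator fun _ => a) :=
        (@measurable_const _ _ _ p.1 a).indicator hs
      convert mul_mem_tradeGains hp h1 using 1
      ext x
      by_cases hx : x ∈ s <;> simp [hx]
    have hle : ∀ a : ℝ, a * inner ℝ (hmem.toLp _) z ≤ 0 := fun a => by
      have h1 := hz (a • hmem.toLp _) ⟨_, hone a, by
        filter_upwards [Lp.coeFn_smul a (hmem.toLp _), hmem.coeFn_toLp] with x h1 h2
        rw [h1, Pi.smul_apply, h2, Pi.smul_apply]⟩
      rwa [real_inner_smul_left] at h1
    have h1 := hle 1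
    have h2 := hle (-1)
    linarith
  · rw [hval _ hgν]
    exact hzg fun ⟨k, hk, hgk⟩ => hgL ⟨k, hk, hμν.ae_le hgk⟩

end PricingDensities

section Stacking

variable {Ω : Type*} {N : ℕ}

/-- The σ-algebra on the disjoint union of `N` copies of `Ω` which is `G i` on the `i`-th copy. -/
@[reducible]
def stackSpace (G : Fin N → MeasurableSpace Ω) : MeasurableSpace (Σ _ : Fin N, Ω) :=
  ⨅ i, (G i).map (Sigma.mk i)

lemma measurableSet_stackSpace {G : Fin N → MeasurableSpace Ω} {s : Set (Σ _ : Fin N, Ω)} :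
    MeasurableSet[stackSpace G] s ↔
      ∀ i, MeasurableSet[G i] ((fun ω => (⟨i, ω⟩ : Σ _ : Fin N, Ω)) ⁻¹' s) :=
  MeasurableSpace.measurableSet_iInf

lemma measurable_stackSpace {G : Fin N → MeasurableSpace Ω} {h : (Σ _ : Fin N, Ω) → ℝ} :
    Measurable[stackSpace G] h ↔ ∀ i, Measurable[G i] fun ω => h ⟨i, ω⟩ :=
  ⟨fun hh i _ hs => measurableSet_stackSpace.1 (hh hs) i,
    fun hh _ hs => measurableSet_stackSpace.2 fun i => hh i hs⟩

lemma stackSpace_mono {G G' : Fin N → MeasurableSpace Ω} (h : ∀ i, G i ≤ G' i) :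
    stackSpace G ≤ stackSpace G' := fun _ hs =>
  measurableSet_stackSpace.2 fun i => h i _ (measurableSet_stackSpace.1 hs i)

lemma stackSpace_le [m0 : MeasurableSpace Ω] {G : Fin N → MeasurableSpace Ω}
    (h : ∀ i, G i ≤ m0) : stackSpace G ≤ Sigma.instMeasurableSpace :=
  stackSpace_mono (G' := fun _ => m0) h

/-- The sum of `N` copies of the measure `P`. -/
noncomputable def stackMeasure [MeasurableSpace Ω] (N : ℕ) (P : Measure Ω) :
    Measure (Σ _ : Fin N, Ω) :=
  ∑ i, P.map (Sigma.mk i)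

instance [MeasurableSpace Ω] (P : Measure Ω) [IsFiniteMeasure P] :
    IsFiniteMeasure (stackMeasure N P) := by
  unfold stackMeasure
  infer_instance

lemma measurableEmbedding_sigmaMk [m0 : MeasurableSpace Ω] (i : Fin N) :
    MeasurableEmbedding (Sigma.mk (β := fun _ : Fin N => Ω) i) where
  injective := sigma_mk_injective
  measurable := fun s hs => (measurableSet_stackSpace (G := fun _ => m0)).1 hs i
  measurableSet_image' := fun s hs => by
    refine (measurableSet_stackSpace (G := fun _ => m0)).2 fun j => ?_
    by_cases hij : i = j
    · subst hij
      exact (Set.preimage_image_eq s (sigma_mk_injective (β := fun _ : Fin N => Ω))).symm ▸ hs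
    · convert MeasurableSet.empty
      ext ω
      simp [hij]

lemma ae_stackMeasure [MeasurableSpace Ω] {P : Measure Ω} {p : (Σ _ : Fin N, Ω) → Prop} :
    (∀ᵐ x ∂stackMeasure N P, p x) ↔ ∀ i, ∀ᵐ ω ∂P, p ⟨i, ω⟩ := by
  rw [stackMeasure, ← Measure.sum_fintype, Measure.ae_sum_iff]
  exact forall_congr' fun i => (measurableEmbedding_sigmaMk i).ae_map_iff

end Stacking

section CollectiveTrades

variable {Ω : Type*} {J N R : ℕ}

/-- The trades in assets with price processes `W ∈ l`, at the times `1, …, T`. -/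
def dynamicTrades {E : Type*} (F : ℕ → MeasurableSpace E) (T : ℕ) (l : List (ℕ → E → ℝ)) :
    List (MeasurableSpace E × (E → ℝ)) :=
  (List.range T).flatMap fun s => l.map fun W => (F s, fun x => W (s + 1) x - W s x)

/-- The deterministic multiples of the zero-sum exchanges and of the vectors `Ys`. -/
noncomputable def exchangeTrades (Ys : Fin R → Fin N → Ω → ℝ) :
    List (MeasurableSpace (Σ _ : Fin N, Ω) × ((Σ _ : Fin N, Ω) → ℝ)) :=
  (List.finRange N).map (fun i => (⊥, fun x => (if x.1 = i then 1 else 0) - (N : ℝ)⁻¹)) ++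
    (List.finRange R).map fun r => (⊥, fun x => Ys r x.1 x.2)

/-- All trades of the collective market in which the processes `W ∈ l` are traded. -/
noncomputable def collectiveTrades (F : Fin N → ℕ → MeasurableSpace Ω) (T : ℕ)
    (Ys : Fin R → Fin N → Ω → ℝ) (l : List (ℕ → (Σ _ : Fin N, Ω) → ℝ)) :
    List (MeasurableSpace (Σ _ : Fin N, Ω) × ((Σ _ : Fin N, Ω) → ℝ)) :=
  exchangeTrades Ys ++ dynamicTrades (fun t => stackSpace fun i => F i t) T l

/-- The price processes available to the agents, an asset being worthless to an agent who does
not trade it. -/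
noncomputable def stackedAssets (assets : Fin N → Finset (Fin J)) (X : Fin J → ℕ → Ω → ℝ) :
    List (ℕ → (Σ _ : Fin N, Ω) → ℝ) :=
  (List.finRange J).map fun j t x => if j ∈ assets x.1 then X j t x.2 else 0

lemma mem_dynamicTrades {E : Type*} {F : ℕ → MeasurableSpace E} {T : ℕ}
    {l : List (ℕ → E → ℝ)} {p : MeasurableSpace E × (E → ℝ)} :
    p ∈ dynamicTrades F T l ↔
      ∃ s < T, ∃ W ∈ l, p = (F s, fun x => W (s + 1) x - W s x) := by
  simp [dynamicTrades, eq_comm]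

lemma pairwise_collectiveTrades {F : Fin N → ℕ → MeasurableSpace Ω} (hF : ∀ i, Monotone (F i))
    (T : ℕ) (Ys : Fin R → Fin N → Ω → ℝ) (l : List (ℕ → (Σ _ : Fin N, Ω) → ℝ)) :
    (collectiveTrades F T Ys l).Pairwise fun p q => p.1 ≤ q.1 := by
  have hbot : ∀ p ∈ exchangeTrades Ys, p.1 = ⊥ := by
    intro p hp
    simp only [exchangeTrades, List.mem_append, List.mem_map] at hp
    rcases hp with ⟨_, -, rfl⟩ | ⟨_, -, rfl⟩ <;> rfl
  refine List.pairwise_append.2 ⟨?_, ?_, fun p hp q _ => (hbot p hp).symm ▸ bot_le⟩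
  · exact List.Pairwise.imp_of_mem (R := fun _ _ => True)
      (fun hp _ _ => (hbot _ hp).symm ▸ bot_le) (List.pairwise_of_forall fun _ _ => trivial)
  · refine List.pairwise_flatMap.2 ⟨fun s _ => ?_, ?_⟩
    · exact List.pairwise_map.2 (List.pairwise_of_forall fun _ _ => le_rfl)
    · refine List.pairwise_lt_range.imp fun {s t} hst p hp q hq => ?_
      simp only [List.mem_map] at hp hq
      obtain ⟨_, -, rfl⟩ := hp
      obtain ⟨_, -, rfl⟩ := hq
      exact stackSpace_mono fun i => hF i hst.le

lemma eq_const_of_measurable_bot {E : Type*} {h : E → ℝ} (hh : Measurable[⊥] h) :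
    ∃ c, ∀ x, h x = c := by
  rcases isEmpty_or_nonempty E with hE | ⟨⟨x₀⟩⟩
  · exact ⟨0, fun x => hE.elim x⟩
  · refine ⟨h x₀, fun x => ?_⟩
    have h1 := hh (measurableSet_singleton (h x₀))
    rcases MeasurableSpace.measurableSet_bot_iff.1 h1 with h2 | h2
    · exact absurd (show x₀ ∈ h ⁻¹' {h x₀} from rfl) (by simp [h2])
    · exact (h2 ▸ Set.mem_univ x : x ∈ h ⁻¹' {h x₀})

lemma sum_Icc_one_eq_sum_range (T : ℕ) (a : ℕ → ℝ) :
    ∑ s ∈ Finset.Icc 1 T, a s = ∑ s ∈ Finset.range T, a (s + 1) := by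
  rw [Finset.range_eq_Ico, Finset.sum_Ico_add' a 0 T 1]
  rfl

lemma zero_mem_spanExch (Ys : Fin R → Fin N → Ω → ℝ) : 0 ∈ spanExch Ys :=
  ⟨0, 0, by simp, fun i => by ext; simp⟩

lemma add_mem_spanExch {Ys : Fin R → Fin N → Ω → ℝ} {y y' : Fin N → Ω → ℝ}
    (hy : y ∈ spanExch Ys) (hy' : y' ∈ spanExch Ys) : y + y' ∈ spanExch Ys := by
  obtain ⟨x, c, hx, hy⟩ := hy
  obtain ⟨x', c', hx', hy'⟩ := hy'
  refine ⟨x + x', c + c', by simp [Finset.sum_add_distrib, hx, hx'], fun i => ?_⟩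
  ext ω
  simp only [Pi.add_apply, hy, hy', add_mul, Finset.sum_add_distrib]
  ring

lemma zero_mem_gainsSet (F : ℕ → MeasurableSpace Ω) (T : ℕ) (A : Finset (Fin J))
    (X : Fin J → ℕ → Ω → ℝ) : 0 ∈ gainsSet F T A X :=
  ⟨fun _ _ _ => 0, fun _ _ s _ _ => @measurable_const _ _ _ (F (s - 1)) _, by ext; simp⟩

lemma add_mem_gainsSet {F : ℕ → MeasurableSpace Ω} {T : ℕ} {A : Finset (Fin J)}
    {X : Fin J → ℕ → Ω → ℝ} {k k' : Ω → ℝ} (hk : k ∈ gainsSet F T A X)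
    (hk' : k' ∈ gainsSet F T A X) : k + k' ∈ gainsSet F T A X := by
  obtain ⟨H, hH, rfl⟩ := hk
  obtain ⟨H', hH', rfl⟩ := hk'
  refine ⟨H + H', fun j hj s h1 h2 => ?_, ?_⟩
  · let := F (s - 1)
    exact (hH j hj s h1 h2).add (hH' j hj s h1 h2)
  · ext ω
    simp [add_mul, Finset.sum_add_distrib]

lemma single_mem_gainsSet {F : ℕ → MeasurableSpace Ω} {T : ℕ} {A : Finset (Fin J)}
    {X : Fin J → ℕ → Ω → ℝ} {j : Fin J} {s : ℕ} (hs : s < T) {h : Ω → ℝ}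
    (hh : Measurable[F s] h) :
    (fun ω => h ω * if j ∈ A then X j (s + 1) ω - X j s ω else 0) ∈ gainsSet F T A X := by
  refine ⟨fun j' s' ω => if j' = j ∧ s' = s + 1 then h ω else 0, fun j' _ s' _ _ => ?_, ?_⟩
  · by_cases hjs : j' = j ∧ s' = s + 1
    · obtain ⟨rfl, rfl⟩ := hjs
      simpa only [and_self, if_true, Nat.add_sub_cancel] using hh
    · simp only [hjs, if_false]
      exact @measurable_const _ _ _ (F (s' - 1)) _
  · ext ω
    simp only [sum_Icc_one_eq_sum_range, ite_and, ite_mul, zero_mul, add_left_inj,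
      Nat.add_sub_cancel]
    by_cases hj : j ∈ A
    · simp [hj, hs]
    · simp [hj]

/-- Gains of the collective market split into individual gains and an exchange. -/
lemma exists_of_mem_tradeGains {F : Fin N → ℕ → MeasurableSpace Ω} {T : ℕ}
    {Ys : Fin R → Fin N → Ω → ℝ} {assets : Fin N → Finset (Fin J)} {X : Fin J → ℕ → Ω → ℝ}
    {g : (Σ _ : Fin N, Ω) → ℝ}
    (hg : g ∈ tradeGains (collectiveTrades F T Ys (stackedAssets assets X))) :
    ∃ k y : Fin N → Ω → ℝ, y ∈ spanExch Ys ∧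
      (∀ i, k i ∈ gainsSet (F i) T (assets i) X) ∧ ∀ x, g x = k x.1 x.2 + y x.1 x.2 := by
  let S : AddSubmonoid ((Σ _ : Fin N, Ω) → ℝ) :=
    { carrier := {g | ∃ k y : Fin N → Ω → ℝ, y ∈ spanExch Ys ∧
        (∀ i, k i ∈ gainsSet (F i) T (assets i) X) ∧ ∀ x, g x = k x.1 x.2 + y x.1 x.2}
      add_mem' := by
        rintro g g' ⟨k, y, hy, hk, hg⟩ ⟨k', y', hy', hk', hg'⟩
        refine ⟨k + k', y + y', add_mem_spanExch hy hy',
          fun i => add_mem_gainsSet (hk i) (hk' i), fun x => ?_⟩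
        simp only [Pi.add_apply, hg, hg']
        ring
      zero_mem' := ⟨0, 0, zero_mem_spanExch Ys, fun i => zero_mem_gainsSet _ _ _ _, by simp⟩ }
  refine tradeGains_le (S := S) ?_ hg
  intro p hp h hh
  simp only [collectiveTrades, exchangeTrades, List.mem_append, List.mem_map,
    mem_dynamicTrades] at hp
  rcases hp with (⟨i, -, rfl⟩ | ⟨r, -, rfl⟩) | ⟨s, hs, W, hW, rfl⟩
  · obtain ⟨c, hc⟩ := eq_const_of_measurable_bot hh
    have hN : (N : ℝ) ≠ 0 := by
      have := i.pos
      positivity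
    refine ⟨0, fun i' _ => c * ((if i' = i then 1 else 0) - (N : ℝ)⁻¹),
      ⟨fun i' => c * ((if i' = i then 1 else 0) - (N : ℝ)⁻¹), 0, ?_, fun i' => by simp⟩,
      fun i' => zero_mem_gainsSet _ _ _ _, fun x => by simp [hc]⟩
    rw [← Finset.mul_sum, Finset.sum_sub_distrib]
    simp [hN]
  · obtain ⟨c, hc⟩ := eq_const_of_measurable_bot hh
    refine ⟨0, fun i ω => c * Ys r i ω, ⟨0, Pi.single r c, by simp, fun i => ?_⟩,
      fun i' => zero_mem_gainsSet _ _ _ _, fun x => by simp [hc]⟩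
    ext ω
    simp [Pi.single_apply]
  · simp only [stackedAssets, List.mem_map] at hW
    obtain ⟨j, -, rfl⟩ := hW
    refine ⟨fun i ω => h ⟨i, ω⟩ * if j ∈ assets i then X j (s + 1) ω - X j s ω else 0, 0,
      zero_mem_spanExch Ys, fun i => single_mem_gainsSet hs (measurable_stackSpace.1 hh i),
      fun x => ?_⟩
    by_cases hj : j ∈ assets x.1 <;> simp [hj]

/-- Gains of the agents in the extended market, together with an exchange, are gains of the
collective market. -/
lemma stack_mem_tradeGains {F : Fin N → ℕ → MeasurableSpace Ω} {T : ℕ}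
    {Ys : Fin R → Fin N → Ω → ℝ} {assets : Fin N → Finset (Fin J)} {X : Fin J → ℕ → Ω → ℝ}
    {Z : ℕ → (Σ _ : Fin N, Ω) → ℝ} {k y : Fin N → Ω → ℝ} (hy : y ∈ spanExch Ys)
    (hk : ∀ i, k i ∈ extGainsSet (F i) T (assets i) X fun t ω => Z t ⟨i, ω⟩) :
    (fun x : Σ _ : Fin N, Ω => k x.1 x.2 + y x.1 x.2) ∈
      tradeGains (collectiveTrades F T Ys (stackedAssets assets X ++ [Z])) := by
  set L := collectiveTrades F T Ys (stackedAssets assets X ++ [Z]) with hL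
  obtain ⟨a, c, ha, hy⟩ := hy
  choose H G hH hG hk using hk
  have hdyn : ∀ s < T, ∀ W ∈ stackedAssets assets X ++ [Z], ∀ h : (Σ _ : Fin N, Ω) → ℝ,
      (∀ i, Measurable[F i s] fun ω => h ⟨i, ω⟩) →
      (fun x => h x * (W (s + 1) x - W s x)) ∈ tradeGains L := fun s hs W hW h hh =>
    mul_mem_tradeGains (p := (stackSpace fun i => F i s, fun x => W (s + 1) x - W s x))
      (List.mem_append_right _ (mem_dynamicTrades.2 ⟨s, hs, W, hW, rfl⟩))
      (measurable_stackSpace.2 hh)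
  have hexch : ∀ p ∈ exchangeTrades Ys, p.1 = ⊥ → ∀ c : ℝ, (fun x => c * p.2 x) ∈ tradeGains L :=
    fun p hp hbot c => mul_mem_tradeGains (List.mem_append_left _ hp)
      (@measurable_const _ _ _ p.1 c)
  have h1 : (∑ j, ∑ s ∈ Finset.range T, fun x : Σ _ : Fin N, Ω =>
      (if j ∈ assets x.1 then H x.1 j (s + 1) x.2 else 0) *
        ((if j ∈ assets x.1 then X j (s + 1) x.2 else 0)
          - if j ∈ assets x.1 then X j s x.2 else 0)) ∈ tradeGains L := by
    refine sum_mem fun j _ => sum_mem fun s hs => ?_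
    have hs' := Finset.mem_range.1 hs
    refine hdyn s hs' (fun t x => if j ∈ assets x.1 then X j t x.2 else 0)
      (List.mem_append_left _ (List.mem_map.2 ⟨j, List.mem_finRange j, rfl⟩)) _ fun i => ?_
    by_cases hj : j ∈ assets i
    · simp only [hj, if_true]
      exact hH i j hj (s + 1) (by omega) (by omega)
    · simp only [hj, if_false]
      exact @measurable_const _ _ _ (F i s) _
  have h2 : (∑ s ∈ Finset.range T, fun x : Σ _ : Fin N, Ω =>
      G x.1 (s + 1) x.2 * (Z (s + 1) x - Z s x)) ∈ tradeGains L := by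
    refine sum_mem fun s hs => ?_
    have hs' := Finset.mem_range.1 hs
    exact hdyn s hs' Z (by simp) _ fun i => hG i (s + 1) (by omega) (by omega)
  have h3 : (∑ i, fun x : Σ _ : Fin N, Ω =>
      a i * ((if x.1 = i then 1 else 0) - (N : ℝ)⁻¹)) ∈ tradeGains L :=
    sum_mem fun i _ => hexch (⊥, fun x => (if x.1 = i then 1 else 0) - (N : ℝ)⁻¹)
      (List.mem_append_left _ (List.mem_map.2 ⟨i, List.mem_finRange i, rfl⟩)) rfl _
  have h4 : (∑ r, fun x : Σ _ : Fin N, Ω => c r * Ys r x.1 x.2) ∈ tradeGains L :=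
    sum_mem fun r _ => hexch (⊥, fun x => Ys r x.1 x.2)
      (List.mem_append_right _ (List.mem_map.2 ⟨r, List.mem_finRange r, rfl⟩)) rfl _
  convert add_mem (add_mem h1 h2) (add_mem h3 h4) using 1
  ext ⟨i, ω⟩
  simp only [hk, hy, Pi.add_apply, Finset.sum_apply, sum_Icc_one_eq_sum_range,
    Nat.add_sub_cancel, mul_sub, Finset.sum_sub_distrib, mul_ite, mul_one, mul_zero]
  rw [← Finset.sum_mul, ha]
  simp [← Finset.sum_sub_distrib]

end CollectiveTrades

section Prices

variable {Ω : Type*} {J N R T : ℕ}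

lemma mem_extGainsSet_of_mem_gainsSet {F : ℕ → MeasurableSpace Ω} {A : Finset (Fin J)}
    {X : Fin J → ℕ → Ω → ℝ} {k : Ω → ℝ} (hk : k ∈ gainsSet F T A X) (Z : ℕ → Ω → ℝ) (a : ℝ) :
    (fun ω => k ω + a * (Z T ω - Z 0 ω)) ∈ extGainsSet F T A X Z := by
  obtain ⟨H, hH, rfl⟩ := hk
  refine ⟨H, fun _ _ => a, hH, fun s _ _ => @measurable_const _ _ _ (F (s - 1)) a, ?_⟩
  ext ω
  simp only [sum_Icc_one_eq_sum_range, Nat.add_sub_cancel]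
  rw [← Finset.mul_sum, Finset.sum_range_sub (fun s => Z s ω)]

lemma measurable_collectiveTrades [m0 : MeasurableSpace Ω] {F : Fin N → ℕ → MeasurableSpace Ω}
    (hF : ∀ i t, F i t ≤ m0) {Ys : Fin R → Fin N → Ω → ℝ} (hYs : ∀ r i, Measurable (Ys r i))
    {l : List (ℕ → (Σ _ : Fin N, Ω) → ℝ)} (hl : ∀ W ∈ l, ∀ t ≤ T, Measurable (W t))
    {p : MeasurableSpace (Σ _ : Fin N, Ω) × ((Σ _ : Fin N, Ω) → ℝ)}
    (hp : p ∈ collectiveTrades F T Ys l) :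
    p.1 ≤ Sigma.instMeasurableSpace ∧ Measurable p.2 := by
  simp only [collectiveTrades, exchangeTrades, List.mem_append, List.mem_map,
    mem_dynamicTrades] at hp
  rcases hp with (⟨i, -, rfl⟩ | ⟨r, -, rfl⟩) | ⟨s, hs, W, hW, rfl⟩
  · exact ⟨bot_le, measurable_stackSpace.2 fun i' => by
      by_cases h : i' = i <;> simp [h]⟩
  · exact ⟨bot_le, measurable_stackSpace.2 fun i' => hYs r i'⟩
  · exact ⟨stackSpace_le fun i => hF i s, (hl W hW _ hs).sub (hl W hW _ hs.le)⟩

lemma measurable_stackedAssets [m0 : MeasurableSpace Ω] {F : Fin N → ℕ → MeasurableSpace Ω}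
    (hF : ∀ i t, F i t ≤ m0) {X : Fin J → ℕ → Ω → ℝ} {assets : Fin N → Finset (Fin J)}
    (hX : ∀ i, ∀ j ∈ assets i, ∀ t, t ≤ T → Measurable[F i t] (X j t))
    {W : ℕ → (Σ _ : Fin N, Ω) → ℝ} (hW : W ∈ stackedAssets assets X) {t : ℕ} (ht : t ≤ T) :
    Measurable (W t) := by
  simp only [stackedAssets, List.mem_map] at hW
  obtain ⟨j, -, rfl⟩ := hW
  refine measurable_stackSpace.2 fun i => ?_
  by_cases hj : j ∈ assets i
  · simpa only [hj, if_true] using (hX i j hj t ht).mono (hF i t) le_rfl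
  · simp only [hj, if_false]
    exact measurable_const

/-- A random variable measurable with respect to a trivial σ-algebra is a.s. constant. -/
lemma exists_ae_eq_const_of_trivial [m0 : MeasurableSpace Ω] {P : Measure Ω}
    [IsProbabilityMeasure P] {G : MeasurableSpace Ω} (hG : G ≤ m0)
    (h01 : ∀ A : Set Ω, MeasurableSet[G] A → P A = 0 ∨ P A = 1) {h : Ω → ℝ}
    (hh : Measurable[G] h) : ∃ a : ℝ, h =ᵐ[P] fun _ => a := by
  refine Filter.exists_eventuallyEq_const_of_forall_separating MeasurableSet fun U hU => ?_
  have hm : MeasurableSet[G] (h ⁻¹' U) := hh hU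
  rcases h01 _ hm with h0 | h1
  · exact Or.inr (measure_eq_zero_iff_ae_notMem.1 h0)
  · exact Or.inl ((prob_compl_eq_zero_iff (hG _ hm)).2 h1)

/-- Under a measure for which the zero-sum exchanges are centred, all agents have equal weight. -/
lemma integral_stack_const [MeasurableSpace Ω] {Q : Measure (Σ _ : Fin N, Ω)} [IsFiniteMeasure Q]
    {Ys : Fin R → Fin N → Ω → ℝ}
    (hQ : ∀ p ∈ exchangeTrades Ys, p.1 ≤ Sigma.instMeasurableSpace ∧ Q[p.2 | p.1] =ᵐ[Q] 0)
    (b : Fin N → ℝ) :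
    Integrable (fun x => b x.1) Q ∧ ∫ x, b x.1 ∂Q = Q.real Set.univ * (N : ℝ)⁻¹ * ∑ i, b i := by
  have hm : ∀ i : Fin N, Measurable fun x : Σ _ : Fin N, Ω => if x.1 = i then (1 : ℝ) else 0 :=
    fun i => measurable_stackSpace.2 fun i' => by
      by_cases h : i' = i <;> simp [h]
  have hint : ∀ i : Fin N,
      Integrable (fun x : Σ _ : Fin N, Ω => if x.1 = i then (1 : ℝ) else 0) Q :=
    fun i => Integrable.of_bound (hm i).aestronglyMeasurable 1
      (ae_of_all _ fun x => by split_ifs <;> simp)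
  have h0 : ∀ i : Fin N,
      ∫ x, (if x.1 = i then (1 : ℝ) else 0) ∂Q = Q.real Set.univ * (N : ℝ)⁻¹ := by
    intro i
    have hp := hQ (⊥, fun x => (if x.1 = i then 1 else 0) - (N : ℝ)⁻¹)
      (List.mem_append_left _ (List.mem_map.2 ⟨i, List.mem_finRange i, rfl⟩))
    have h1 := integral_condExp (μ := Q) hp.1
      (f := fun x => (if x.1 = i then 1 else 0) - (N : ℝ)⁻¹)
    rw [integral_congr_ae hp.2, integral_sub (hint i) (integrable_const _)] at h1
    simp only [Pi.zero_apply, integral_zero, integral_const, smul_eq_mul] at h1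
    linarith
  have hb : (fun x : Σ _ : Fin N, Ω => b x.1) =
      fun x => ∑ i, b i * if x.1 = i then (1 : ℝ) else 0 := by
    ext x
    simp
  rw [hb]
  refine ⟨integrable_finsetSum _ fun i _ => (hint i).const_mul _, ?_⟩
  rw [integral_finsetSum _ fun i _ => (hint i).const_mul _, Finset.mul_sum]
  exact Finset.sum_congr rfl fun i _ => by rw [integral_const_mul, h0, mul_comm]

variable [m0 : MeasurableSpace Ω] {P : Measure Ω}
  {F : Fin N → ℕ → MeasurableSpace Ω} {X : Fin J → ℕ → Ω → ℝ} {assets : Fin N → Finset (Fin J)}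
  {Ys : Fin R → Fin N → Ω → ℝ} {f : Fin N → Ω → ℝ}

/-- The collective market has arbitrage-free prices for `f`, whose sum exceeds that of `c` unless
`f - c` can be super-replicated at zero cost. -/
lemma exists_isNCAPrice [IsProbabilityMeasure P] (hFmono : ∀ i, Monotone (F i))
    (hFle : ∀ i t, F i t ≤ m0)
    (hFzero : ∀ i, ∀ A : Set Ω, MeasurableSet[F i 0] A → P A = 0 ∨ P A = 1)
    (hadapted : ∀ i, ∀ j ∈ assets i, ∀ t, t ≤ T → Measurable[F i t] (X j t))
    (hYsmeas : ∀ r i, Measurable[F i T] (Ys r i))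
    (hNCA : NCA P (fun i => gainsSet (F i) T (assets i) X) (spanExch Ys))
    (hfmeas : ∀ i, Measurable[F i T] (f i)) (c : Fin N → ℝ) :
    ∃ π : Fin N → ℝ, IsNCAPrice P F T assets X (spanExch Ys) f π ∧
      ((¬ ∃ k ∈ tradeGains (collectiveTrades F T Ys (stackedAssets assets X)),
        (fun x => f x.1 x.2 - c x.1) ≤ᵐ[stackMeasure N P] k) → ∑ i, c i < ∑ i, π i) := by
  set μ := stackMeasure N P with hμ
  set L := collectiveTrades F T Ys (stackedAssets assets X) with hL
  have hNA : ∀ k ∈ tradeGains L, 0 ≤ᵐ[μ] k → k =ᵐ[μ] 0 := by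
    intro k hk hk0
    obtain ⟨k', y, hy, hk', hky⟩ := exists_of_mem_tradeGains hk
    refine ae_stackMeasure.2 fun i => ?_
    have h0 := hNCA k' y hy hk' (fun i => (ae_stackMeasure.1 hk0 i).mono fun ω hω => by
      simpa [hky] using hω) i
    filter_upwards [h0] with ω hω
    simpa [hky] using hω
  have hYs' : ∀ r i, Measurable (Ys r i) := fun r i => (hYsmeas r i).mono (hFle i T) le_rfl
  have hLm : ∀ p ∈ L, p.1 ≤ Sigma.instMeasurableSpace ∧ Measurable p.2 := fun p hp =>
    measurable_collectiveTrades hFle hYs'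
      (fun W hW t ht => measurable_stackedAssets hFle hadapted hW ht) hp
  set φ : (Σ _ : Fin N, Ω) → ℝ := fun x => f x.1 x.2 with hφ
  have hφT : Measurable[stackSpace fun i => F i T] φ := measurable_stackSpace.2 hfmeas
  have hST : ∀ t, stackSpace (fun i => F i t) ≤ Sigma.instMeasurableSpace := fun t =>
    stackSpace_le fun i => hFle i t
  have hSmono : ∀ {s t}, s ≤ t → stackSpace (fun i => F i s) ≤ stackSpace (fun i => F i t) :=
    fun hst => stackSpace_mono fun i => hFmono i hst
  have hcm : Measurable fun x : Σ _ : Fin N, Ω => c x.1 :=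
    measurable_stackSpace.2 fun i => by
      dsimp only
      exact measurable_const
  obtain ⟨Q, hQfin, hQμ, hμQ, hQL, hgQ, hpos⟩ := exists_equivalent_pricing_measure μ
    (pairwise_collectiveTrades hFmono T Ys _) hLm hNA
    (g := fun x => f x.1 x.2 - c x.1) ((hφT.mono (hST T) le_rfl).sub hcm)
  have hexch := integral_stack_const (Q := Q) (Ys := Ys) fun p hp =>
    ⟨(hLm p (List.mem_append_left _ hp)).1, (hQL p (List.mem_append_left _ hp)).2⟩
  have hφQ : Integrable φ Q := by
    refine (hgQ.add (hexch c).1).congr (ae_of_all _ fun x => ?_)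
    simp [hφ]
  set Z : ℕ → (Σ _ : Fin N, Ω) → ℝ := fun t => Q[φ | stackSpace fun i => F i t] with hZ
  have hZm : ∀ t, Measurable[stackSpace fun i => F i t] (Z t) := fun t =>
    stronglyMeasurable_condExp.measurable
  have hZT : Z T = φ := condExp_of_stronglyMeasurable (hST T) hφT.stronglyMeasurable hφQ
  have hZ0 : ∀ i, ∃ a : ℝ, (fun ω => Z 0 ⟨i, ω⟩) =ᵐ[P] fun _ => a := fun i =>
    exists_ae_eq_const_of_trivial (hFle i 0) (hFzero i) (measurable_stackSpace.1 (hZm 0) i)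
  choose π hπ using hZ0
  have hcentred : ∀ p ∈ collectiveTrades F T Ys (stackedAssets assets X ++ [Z]),
      p.1 ≤ Sigma.instMeasurableSpace ∧ Integrable p.2 Q ∧ Q[p.2 | p.1] =ᵐ[Q] 0 := by
    intro p hp
    rcases List.mem_append.1 hp with hp | hp
    · have hp' : p ∈ L := List.mem_append_left _ hp
      exact ⟨(hLm p hp').1, hQL p hp'⟩
    · obtain ⟨s, hs, W, hW, rfl⟩ := mem_dynamicTrades.1 hp
      rcases List.mem_append.1 hW with hW | hW
      · have hp' := List.mem_append_right (exchangeTrades Ys) (mem_dynamicTrades.2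
          ⟨s, hs, W, hW, rfl⟩ : _ ∈ dynamicTrades (fun t => stackSpace fun i => F i t) T
            (stackedAssets assets X))
        exact ⟨(hLm _ hp').1, hQL _ hp'⟩
      · obtain rfl := List.mem_singleton.1 hW
        refine ⟨hST s, integrable_condExp.sub integrable_condExp, ?_⟩
        refine (condExp_sub integrable_condExp integrable_condExp _).trans ?_
        have h1 : Q[Z (s + 1) | stackSpace fun i => F i s] =ᵐ[Q] Z s :=
          condExp_condExp_of_le (hSmono s.le_succ) (hST _)
        have h2 : Q[Z s | stackSpace fun i => F i s] = Z s :=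
          condExp_of_stronglyMeasurable (hST s) stronglyMeasurable_condExp integrable_condExp
        filter_upwards [h1] with x hx
        exact sub_eq_zero.2 (hx.trans (congrFun h2 x).symm)
  refine ⟨π, ⟨fun i t ω => Z t ⟨i, ω⟩, fun i t _ => measurable_stackSpace.1 (hZm t) i, hπ,
    fun i => by simp [hZT, hφ], ?_⟩, fun hnot => ?_⟩
  · intro k y hy hk hnn
    have hmem := stack_mem_tradeGains hy hk
    have hnn' : ∀ᵐ x ∂Q, 0 ≤ k x.1 x.2 + y x.1 x.2 := hQμ.ae_le (ae_stackMeasure.2 hnn)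
    obtain ⟨hi, h0⟩ := integral_tradeGains_eq_zero (pairwise_collectiveTrades hFmono T Ys _)
      hcentred hmem (integrable_zero _ _ _) (by simpa using hnn')
    have h1 := (integral_eq_zero_iff_of_nonneg_ae hnn' hi).1 h0
    exact fun i => ae_stackMeasure.1 (hμQ.ae_le h1) i
  · have h1 := hpos hnot
    rw [integral_sub hφQ (hexch c).1, (hexch c).2] at h1
    have h2 : ∫ x, φ x ∂Q = ∫ x, π x.1 ∂Q := by
      rw [← integral_condExp (hST 0) (f := φ)]
      exact integral_congr_ae (hQμ.ae_le (ae_stackMeasure.2 hπ))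
    have h3 : ∫ x, f x.1 x.2 ∂Q = ∫ x, π x.1 ∂Q := h2
    rw [h3, (hexch π).2, ← mul_sub] at h1
    have h4 : 0 ≤ Q.real Set.univ * (N : ℝ)⁻¹ := by positivity
    linarith [pos_of_mul_pos_right h1 h4]

/-- A price is bounded by the cost of super-replication by the agent alone. -/
lemma isNCAPrice_mul_le [IsProbabilityMeasure P] {π : Fin N → ℝ}
    (hπ : IsNCAPrice P F T assets X (spanExch Ys) f π)
    (i : Fin N) {σ a : ℝ} {k : Ω → ℝ} (hk : k ∈ gainsSet (F i) T (assets i) X)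
    (h : ∀ᵐ ω ∂P, σ * f i ω ≤ a + k ω) : σ * π i ≤ a := by
  obtain ⟨Z, -, hZ0, hZT, hZ⟩ := hπ
  by_contra! hlt
  set K : Fin N → Ω → ℝ := fun j ω => (if j = i then k ω else 0) +
    (if j = i then -σ else 0) * (Z j T ω - Z j 0 ω) with hK
  have hKmem : ∀ j, K j ∈ extGainsSet (F j) T (assets j) X (Z j) := by
    intro j
    refine mem_extGainsSet_of_mem_gainsSet (k := fun ω => if j = i then k ω else 0) ?_ (Z j) _
    by_cases hj : j = i
    · subst hj
      simpa using hk
    · simp only [hj, if_false]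
      exact zero_mem_gainsSet (F j) T (assets j) X
  have hbound : ∀ᵐ ω ∂P, 0 < K i ω := by
    filter_upwards [h, hZ0 i, hZT i] with ω h1 h2 h3
    simp only [hK, if_true, h2, h3]
    linarith
  have h0 := hZ K 0 (zero_mem_spanExch Ys) hKmem (fun j => by
    by_cases hj : j = i
    · subst hj
      filter_upwards [hbound] with ω hω
      simpa using hω.le
    · simp [hK, hj]) i
  obtain ⟨ω, h1, h2⟩ := (hbound.and h0).exists
  simp only [Pi.zero_apply, add_zero] at h2
  exact h1.ne' h2

lemma exists_superreplication_of_rhoIPlus_lt_top {Ki : Set (Ω → ℝ)} {g : Ω → ℝ}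
    (h : rhoIPlus P Ki g < ⊤) : ∃ a : ℝ, ∃ k ∈ Ki, ∀ᵐ ω ∂P, g ω ≤ a + k ω := by
  obtain ⟨_, ⟨a, -, ha⟩, -⟩ := sInf_lt_iff.1 h
  exact ⟨a, ha⟩

/-- A claim which is super-replicable at the cost of one of its prices is replicable. -/
lemma replicable_of_isNCAPrice_of_le {π : Fin N → ℝ}
    (hπ : IsNCAPrice P F T assets X (spanExch Ys) f π) {g : (Σ _ : Fin N, Ω) → ℝ}
    (hg : g ∈ tradeGains (collectiveTrades F T Ys (stackedAssets assets X)))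
    (hle : (fun x => f x.1 x.2 - π x.1) ≤ᵐ[stackMeasure N P] g) :
    Replicable P (fun i => gainsSet (F i) T (assets i) X) (spanExch Ys) f := by
  obtain ⟨Z, -, hZ0, hZT, hZ⟩ := hπ
  obtain ⟨k, y, hy, hk, hky⟩ := exists_of_mem_tradeGains hg
  refine ⟨π, k, y, hy, hk, fun i => ?_⟩
  have h0 := hZ (fun i ω => k i ω + -1 * (Z i T ω - Z i 0 ω)) y hy
    (fun i => mem_extGainsSet_of_mem_gainsSet (hk i) (Z i) (-1)) (fun i => by
      filter_upwards [ae_stackMeasure.1 hle i, hZ0 i, hZT i] with ω h1 h2 h3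
      simp only [hky] at h1
      rw [h2, h3]
      linarith) i
  filter_upwards [h0, hZ0 i, hZT i] with ω h1 h2 h3
  rw [h2, h3] at h1
  linarith

end Prices

/-- for a non-replicable claim with finite classical super-replication
prices, the set of NCA(𝒴)-prices is not closed (Proposition notclosed). -/
theorem NCA_prices_not_closed
    {Ω : Type*} [m0 : MeasurableSpace Ω]
    (P : Measure Ω) [IsProbabilityMeasure P]
    (T J N : ℕ) (hT : 1 ≤ T) (hJ : 1 ≤ J) (hN : 1 ≤ N)
    (F : Fin N → ℕ → MeasurableSpace Ω)
    (hFmono : ∀ i, Monotone (F i))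
    (hFle : ∀ i t, F i t ≤ m0)
    (hFzero : ∀ i, ∀ A : Set Ω, MeasurableSet[F i 0] A → P A = 0 ∨ P A = 1)
    (X : Fin J → ℕ → Ω → ℝ)
    (assets : Fin N → Finset (Fin J))
    (hassets : ∀ i, (assets i).Nonempty)
    (hcover : ∀ j, ∃ i, j ∈ assets i)
    (hadapted : ∀ i, ∀ j ∈ assets i, ∀ t, t ≤ T → Measurable[F i t] (X j t))
    (R : ℕ) (Ys : Fin R → Fin N → Ω → ℝ)
    (hYsmeas : ∀ r i, Measurable[F i T] (Ys r i))
    (hNCA : NCA P (fun i => gainsSet (F i) T (assets i) X) (spanExch Ys))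
    (f : Fin N → Ω → ℝ) (hfmeas : ∀ i, Measurable[F i T] (f i))
    (hfnotrep : ¬ Replicable P (fun i => gainsSet (F i) T (assets i) X) (spanExch Ys) f)
    (hfin₁ : ∀ i, rhoIPlus P (gainsSet (F i) T (assets i) X) (f i) < ⊤)
    (hfin₂ : ∀ i, rhoIPlus P (gainsSet (F i) T (assets i) X) (fun ω => - f i ω) < ⊤) :
    ¬ IsClosed { pi : Fin N → ℝ | IsNCAPrice P F T assets X (spanExch Ys) f pi } := by
  intro hclosed
  have hprice := exists_isNCAPrice hFmono hFle hFzero hadapted hYsmeas hNCA hfmeas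
  choose a k hk hak using fun i => exists_superreplication_of_rhoIPlus_lt_top (hfin₁ i)
  choose b l hl hbl using fun i => exists_superreplication_of_rhoIPlus_lt_top (hfin₂ i)
  have hcompact : IsCompact {π : Fin N → ℝ | IsNCAPrice P F T assets X (spanExch Ys) f π} := by
    refine (isCompact_Icc (a := -b) (b := a)).of_isClosed_subset hclosed fun π hπ => ⟨?_, ?_⟩
    · intro i
      have := isNCAPrice_mul_le hπ i (σ := -1) (hl i) (by simpa using hbl i)
      simp only [Pi.neg_apply]
      linarith
    · intro i
      have := isNCAPrice_mul_le hπ i (σ := 1) (hk i) (by simpa using hak i)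
      linarith
  obtain ⟨π₀, hπ₀, -⟩ := hprice 0
  obtain ⟨π, hπ, hmax⟩ := hcompact.exists_isMaxOn ⟨π₀, hπ₀⟩
    (f := fun π : Fin N → ℝ => ∑ i, π i) (by fun_prop)
  obtain ⟨π', hπ', hlt⟩ := hprice π
  refine (hlt ?_).not_ge (hmax hπ')
  rintro ⟨g, hg, hle⟩
  exact hfnotrep (replicable_of_isNCAPrice_of_le hπ hg hle)

end CollectiveArb
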